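/- arXiv:2206.00579 — 3 statements merged into one kernel-verified Lean document; each statement's English description precedes it below -/
import Mathlib

section
/- Let n ≥ 1 and let K ≥ 0 be a real number. Let the vertices v₁, v₂, …, vₙ of the cycle graph Cₙ (indexed in cyclic order) be assigned real labels ℓ(vᵢ) with |ℓ(vᵢ)| ≤ K for all i, and set r = Σᵢ ℓ(vᵢ). Then there exists a sequence of subsets ∅ = X₀, X₁, …, X_T = V(Cₙ) of V(Cₙ) such that: each Xᵢ with 0 < i < T is a nonempty proper set of cyclically consecutive vertices (i.e., induces a path in Cₙ); the symmetric difference of Xᵢ and Xᵢ₊₁ is a single vertex for every 0 ≤ i < T; and for every 0 ≤ i ≤ T, |Σ_{v∈Xᵢ} ℓ(v) − (|Xᵢ|/n)·r| ≤ 2K. -/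
/-!
Subtracting the mean, assume that the labels `w` sum to zero and differ pairwise by at most `M`.
Then `w` is the increment of a potential `S` on the cycle, so an arc from `a` to `b` has sum
`S b - S a`. Fix a minimum `p` of `S` and arrange the arcs whose closure contains the cut `p` in a
triangular array, the `k`-th row holding the arcs with `k` vertices. Arcs starting at `p` have
nonnegative sum and arcs ending at `p` have nonpositive sum, so each row changes sign. The sums of
two neighbours in the array differ by at most `M`, so both lie in `[-M, M]` wherever the sign
changes. Count with sign those sign changes in a row that can be reached from the empty arc through
sums in `[-M, M]`: passing from one row to the next across the triangles of the array preserves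
this count, which is `1` in the first row. So the count is `1` in the last row too, where every arc
is the whole cycle.
-/

section OppositeSigns

variable {α : Type*} [AddCommGroup α] [LinearOrder α] [IsOrderedAddMonoid α] {M : α}

lemma abs_le_and_abs_le_of_nonpos_of_nonneg {s t : α} (hs : s ≤ 0) (ht : 0 ≤ t)
    (h : |s - t| ≤ M) : |s| ≤ M ∧ |t| ≤ M := by
  rw [abs_sub_comm, abs_of_nonneg (sub_nonneg.2 (hs.trans ht)), sub_eq_add_neg] at h
  rw [abs_of_nonpos hs, abs_of_nonneg ht]
  exact ⟨(le_add_of_nonneg_left ht).trans h, (le_add_of_nonneg_right (neg_nonneg.2 hs)).trans h⟩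

lemma abs_le_of_sum_eq_zero {ι : Type*} [Fintype ι] {w : ι → α} (hsum : ∑ i, w i = 0)
    (hosc : ∀ i j, |w i - w j| ≤ M) (i : ι) : |w i| ≤ M := by
  have hne : (Finset.univ : Finset ι).Nonempty := ⟨i, Finset.mem_univ i⟩
  rcases le_total (w i) 0 with hi | hi
  · obtain ⟨j, -, hj⟩ := Finset.exists_le_of_sum_le (f := 0) (g := w) hne (by simp [hsum])
    exact (abs_le_and_abs_le_of_nonpos_of_nonneg hi hj (hosc i j)).1
  · obtain ⟨j, -, hj⟩ := Finset.exists_le_of_sum_le (f := w) (g := 0) hne (by simp [hsum])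
    exact (abs_le_and_abs_le_of_nonpos_of_nonneg hj hi (hosc j i)).2

end OppositeSigns

section Crossing

variable {V : Type*}

open Classical in
/-- The signed number (`1`, `-1` or `0`) of times the step from `x` to `y` leaves `P`, counted only
if `x` satisfies `R`. This is the discrete form of `-χ_R dχ_P`, which is closed when `χ_R` is
constant wherever `χ_P` changes. -/
noncomputable def crossing (P R : V → Prop) (x y : V) : ℤ :=
  if R x then (if P x then 1 else 0) - (if P y then 1 else 0) else 0

variable {α : Type*} [AddCommGroup α] [LinearOrder α] [IsOrderedAddMonoid α]
  {P R : V → Prop} {h : V → α} {M : α}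

lemma abs_le_and_abs_le_of_not_iff (hP : ∀ v, P v → 0 ≤ h v) (hnP : ∀ v, ¬P v → h v ≤ 0)
    {x y : V} (hxy : |h x - h y| ≤ M) (hne : ¬(P x ↔ P y)) : |h x| ≤ M ∧ |h y| ≤ M := by
  by_cases hx : P x
  · have hy : ¬P y := fun hy => hne (iff_of_true hx hy)
    exact (abs_le_and_abs_le_of_nonpos_of_nonneg (hnP y hy) (hP x hx)
      (abs_sub_comm (h x) (h y) ▸ hxy)).symm
  · have hy : P y := by_contra fun hy => hne (iff_of_false hx hy)
    exact abs_le_and_abs_le_of_nonpos_of_nonneg (hnP x hx) (hP y hy) hxy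

lemma crossing_add_crossing (hP : ∀ v, P v → 0 ≤ h v) (hnP : ∀ v, ¬P v → h v ≤ 0) {x y z : V}
    (hxy : |h x - h y| ≤ M) (hyz : |h y - h z| ≤ M) (hxz : |h x - h z| ≤ M)
    (hRxy : |h x| ≤ M → |h y| ≤ M → (R x ↔ R y))
    (hRyz : |h y| ≤ M → |h z| ≤ M → (R y ↔ R z)) :
    crossing P R x y + crossing P R y z = crossing P R x z := by
  by_cases hmono : (P x ↔ P y) ∧ (P y ↔ P z)
  · grind [crossing]
  · have hsmall : |h x| ≤ M ∧ |h y| ≤ M ∧ |h z| ≤ M := by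
      have := abs_le_and_abs_le_of_not_iff hP hnP hxy
      have := abs_le_and_abs_le_of_not_iff hP hnP hyz
      have := abs_le_and_abs_le_of_not_iff hP hnP hxz
      tauto
    obtain ⟨hx, hy, hz⟩ := hsmall
    have : (R x ↔ R y) ∧ (R y ↔ R z) := ⟨hRxy hx hy, hRyz hy hz⟩
    grind [crossing]

lemma crossing_eq_zero {x y : V} (hxy : P x ↔ P y) : crossing P R x y = 0 := by
  grind [crossing]

lemma sum_range_succ_eq_of_zigzag {A : Type*} [AddCommMonoid A] {e : V → V → A} {x y : ℕ → V}
    {k : ℕ} (hy : ∀ i, e (y i) (x i) + e (x i) (y (i + 1)) = e (y i) (y (i + 1)))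
    (hx : ∀ i, e (x i) (y (i + 1)) + e (y (i + 1)) (x (i + 1)) = e (x i) (x (i + 1))) :
    ∑ i ∈ Finset.range (k + 1), e (y i) (y (i + 1)) =
      e (y 0) (x 0) + ∑ i ∈ Finset.range k, e (x i) (x (i + 1)) + e (x k) (y (k + 1)) := by
  simp only [← hy, ← hx, Finset.sum_add_distrib]
  rw [Finset.sum_range_succ', Finset.sum_range_succ]
  abel

end Crossing

section TriangularArray

section PositiveEntry

variable {α : Type*} [Zero α] [LinearOrder α] {f : ℕ × ℕ → α} {v : ℕ × ℕ}

/-- Positivity of the entry `v = (k, i)` of a triangular array `f`, with ties broken so that every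
row starts with a positive entry and every row but the zeroth ends with a nonpositive one. -/
def IsPositiveEntry (f : ℕ × ℕ → α) (v : ℕ × ℕ) : Prop :=
  v.2 = 0 ∨ v.2 ≠ v.1 ∧ 0 < f v

lemma IsPositiveEntry.nonneg (hleft : ∀ k, 0 ≤ f (k, 0)) (hv : IsPositiveEntry f v) :
    0 ≤ f v := by
  obtain ⟨k, i⟩ := v
  rcases hv with rfl | ⟨-, hpos⟩
  exacts [hleft k, hpos.le]

lemma nonpos_of_not_isPositiveEntry (hright : ∀ k, f (k, k) ≤ 0) (hv : ¬IsPositiveEntry f v) :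
    f v ≤ 0 := by
  obtain ⟨k, i⟩ := v
  simp only [IsPositiveEntry, not_or, not_and, not_lt] at hv
  by_cases hik : i = k
  · exact hik ▸ hright k
  · exact hv.2 hik

end PositiveEntry

variable {α : Type*} [AddCommGroup α] [LinearOrder α] [IsOrderedAddMonoid α]
  {f : ℕ × ℕ → α} {R : ℕ × ℕ → Prop} {M : α} {n : ℕ}

lemma sum_crossing_succ_row (hleft : ∀ k, 0 ≤ f (k, 0)) (hright : ∀ k, f (k, k) ≤ 0) {k : ℕ}
    (hrow : ∀ r i, |f (r, i) - f (r, i + 1)| ≤ M)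
    (hdown : ∀ i, |f (k, i) - f (k + 1, i)| ≤ M)
    (hdiag : ∀ i, |f (k, i) - f (k + 1, i + 1)| ≤ M)
    (hRdown : ∀ i, |f (k, i)| ≤ M → |f (k + 1, i)| ≤ M → (R (k, i) ↔ R (k + 1, i)))
    (hRdiag : ∀ i, |f (k, i)| ≤ M → |f (k + 1, i + 1)| ≤ M → (R (k, i) ↔ R (k + 1, i + 1))) :
    ∑ i ∈ Finset.range (k + 1), crossing (IsPositiveEntry f) R (k + 1, i) (k + 1, i + 1) =
      ∑ i ∈ Finset.range k, crossing (IsPositiveEntry f) R (k, i) (k, i + 1) +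
        crossing (IsPositiveEntry f) R (k, k) (k + 1, k + 1) := by
  have hpos : ∀ v, IsPositiveEntry f v → 0 ≤ f v := fun _ hv => hv.nonneg hleft
  have hnonpos : ∀ v, ¬IsPositiveEntry f v → f v ≤ 0 :=
    fun _ => nonpos_of_not_isPositiveEntry hright
  have hup : ∀ i, |f (k + 1, i) - f (k, i)| ≤ M := fun i => abs_sub_comm (f (k, i)) _ ▸ hdown i
  have hRup : ∀ i, |f (k + 1, i)| ≤ M → |f (k, i)| ≤ M → (R (k + 1, i) ↔ R (k, i)) :=
    fun i hy hx => (hRdown i hx hy).symm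
  have hzero : crossing (IsPositiveEntry f) R (k + 1, 0) (k, 0) = 0 :=
    crossing_eq_zero (by simp [IsPositiveEntry])
  rw [sum_range_succ_eq_of_zigzag (x := fun i => (k, i)) (y := fun i => (k + 1, i))
    (e := crossing (IsPositiveEntry f) R), hzero, zero_add]
  · exact fun i => crossing_add_crossing hpos hnonpos (hup i) (hdiag i) (hrow _ i) (hRup i)
      (hRdiag i)
  · exact fun i => crossing_add_crossing hpos hnonpos (hdiag i) (hup (i + 1)) (hrow _ i) (hRdiag i)
      (hRup (i + 1))

theorem exists_mem_row_of_triangular_array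
    (hleft : ∀ k, 0 ≤ f (k, 0)) (hright : ∀ k, f (k, k) ≤ 0)
    (hrow : ∀ k i, |f (k, i) - f (k, i + 1)| ≤ M)
    (hdown : ∀ k i, |f (k, i) - f (k + 1, i)| ≤ M)
    (hdiag : ∀ k i, |f (k, i) - f (k + 1, i + 1)| ≤ M) (hR : R (0, 0))
    (hRdown : ∀ k < n, ∀ i,
      |f (k, i)| ≤ M → |f (k + 1, i)| ≤ M → (R (k, i) ↔ R (k + 1, i)))
    (hRdiag : ∀ k < n, ∀ i,
      |f (k, i)| ≤ M → |f (k + 1, i + 1)| ≤ M → (R (k, i) ↔ R (k + 1, i + 1))) :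
    ∃ i, R (n, i) := by
  have hcount : ∀ k < n, ∑ i ∈ Finset.range (k + 1),
      crossing (IsPositiveEntry f) R (k + 1, i) (k + 1, i + 1) = 1 := by
    intro k hk
    induction k with
    | zero =>
      rw [sum_crossing_succ_row hleft hright hrow (hdown 0) (hdiag 0) (hRdown 0 hk) (hRdiag 0 hk)]
      simp [crossing, IsPositiveEntry, hR]
    | succ k ih =>
      rw [sum_crossing_succ_row hleft hright hrow (hdown _) (hdiag _) (hRdown _ hk) (hRdiag _ hk),
        ih (Nat.lt_of_succ_lt hk), crossing_eq_zero (by simp [IsPositiveEntry]), add_zero]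
  cases n with
  | zero => exact ⟨0, hR⟩
  | succ k =>
    obtain ⟨i, -, hi⟩ := Finset.exists_ne_zero_of_sum_ne_zero
      ((hcount k k.lt_succ_self).trans_ne one_ne_zero)
    exact ⟨i, by_contra fun hRi => hi (if_neg hRi)⟩

end TriangularArray

section CycleArc

variable {n : ℕ}

/-- The set of the `m` cyclically consecutive vertices `a, a + 1, …, a + m - 1` of the cycle
`ZMod n`. It is the whole cycle when `0 < n ≤ m`. -/
def cycleArc (a : ZMod n) (m : ℕ) : Finset (ZMod n) :=
  (Finset.range m).image fun j : ℕ => a + (j : ZMod n)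

lemma cycleArc_subset_succ (a : ZMod n) (m : ℕ) : cycleArc a m ⊆ cycleArc a (m + 1) :=
  Finset.image_subset_image (Finset.range_mono m.le_succ)

lemma cycleArc_add_one_subset_succ (a : ZMod n) (m : ℕ) :
    cycleArc (a + 1) m ⊆ cycleArc a (m + 1) := by
  refine Finset.image_subset_iff.2 fun j hj => Finset.mem_image.2 ⟨j + 1, ?_, ?_⟩
  · simpa using hj
  · push_cast; ring

lemma injOn_add_natCast (a : ZMod n) {m : ℕ} (hm : m ≤ n) :
    Set.InjOn (fun j : ℕ => a + (j : ZMod n)) (Finset.range m) := by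
  intro i hi j hj hij
  rw [Finset.coe_range] at hi hj
  exact CharP.natCast_injOn_Iio (ZMod n) n (hi.trans_le hm) (hj.trans_le hm) (add_left_cancel hij)

lemma card_cycleArc (a : ZMod n) {m : ℕ} (hm : m ≤ n) : (cycleArc a m).card = m := by
  rw [cycleArc, Finset.card_image_of_injOn (injOn_add_natCast a hm), Finset.card_range]

lemma cycleArc_eq_univ [NeZero n] (a : ZMod n) : cycleArc a n = Finset.univ :=
  Finset.eq_univ_of_card _ (by rw [card_cycleArc a le_rfl, ZMod.card])

lemma sum_cycleArc {α : Type*} [AddCommMonoid α] (w : ZMod n → α) (a : ZMod n) {m : ℕ}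
    (hm : m ≤ n) : ∑ v ∈ cycleArc a m, w v = ∑ j ∈ Finset.range m, w (a + (j : ZMod n)) :=
  Finset.sum_image (injOn_add_natCast a hm)

end CycleArc

section Potential

variable {n : ℕ} {α : Type*} [AddCommGroup α] {w S : ZMod n → α}

lemma exists_eq_sub_of_sum_eq_zero [NeZero n] (hsum : ∑ v, w v = 0) :
    ∃ S : ZMod n → α, ∀ a, w a = S (a + 1) - S a := by
  let partialSum : ℕ → α := fun k => ∑ j ∈ Finset.range k, w j
  have hperiodic : Function.Periodic partialSum n := by
    intro k
    simp only [partialSum, Finset.sum_range_add, Nat.cast_add]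
    rw [← sum_cycleArc w (k : ZMod n) le_rfl, cycleArc_eq_univ, hsum, add_zero]
  have hcast : ∀ k : ℕ, partialSum (k : ZMod n).val = partialSum k := fun k => by
    rw [ZMod.val_natCast, hperiodic.map_mod_nat]
  refine ⟨fun a => partialSum a.val, fun a => ?_⟩
  obtain ⟨k, rfl⟩ := ZMod.natCast_zmod_surjective a
  simp only [← Nat.cast_succ, hcast]
  exact eq_sub_of_add_eq' (Finset.sum_range_succ _ k).symm

/-- The triangular array whose entry `(k, i)` is the increment of the potential `S` along the arc of
length `k` starting at `p - i`. For `i ≤ k` these are the arcs that contain the cut at `p`: they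
extend `i` vertices to its left and `k - i` vertices to its right. -/
def arcIncrement (S : ZMod n → α) (p : ZMod n) (v : ℕ × ℕ) : α :=
  S (p - v.2 + v.1) - S (p - v.2)

lemma sum_cycleArc_eq_arcIncrement (hS : ∀ a, w a = S (a + 1) - S a) (p : ZMod n) (i : ℕ) {k : ℕ}
    (hk : k ≤ n) : ∑ v ∈ cycleArc (p - (i : ZMod n)) k, w v = arcIncrement S p (k, i) := by
  rw [sum_cycleArc w _ hk, arcIncrement]
  simpa [hS, add_assoc] using Finset.sum_range_sub (fun j : ℕ => S (p - i + j)) k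

lemma sub_natCast_eq_sub_succ_add_one (p : ZMod n) (i : ℕ) :
    p - (i : ZMod n) = p - ((i + 1 : ℕ) : ZMod n) + 1 := by
  push_cast; ring

lemma arcIncrement_succ_sub (hS : ∀ a, w a = S (a + 1) - S a) (p : ZMod n) (k i : ℕ) :
    arcIncrement S p (k + 1, i) - arcIncrement S p (k, i) = w (p - i + k) := by
  simp only [arcIncrement, hS, Nat.cast_succ, add_assoc]
  abel

lemma arcIncrement_succ_succ_sub (hS : ∀ a, w a = S (a + 1) - S a) (p : ZMod n) (k i : ℕ) :
    arcIncrement S p (k + 1, i + 1) - arcIncrement S p (k, i) = w (p - (i + 1 : ℕ)) := by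
  have hend : p - ((i + 1 : ℕ) : ZMod n) + ((k + 1 : ℕ) : ZMod n) = p - i + k := by
    push_cast; ring
  simp only [arcIncrement, hS, hend, ← sub_natCast_eq_sub_succ_add_one]
  abel

lemma arcIncrement_sub_right (hS : ∀ a, w a = S (a + 1) - S a) (p : ZMod n) (k i : ℕ) :
    arcIncrement S p (k, i) - arcIncrement S p (k, i + 1) =
      w (p - (i + 1 : ℕ) + k) - w (p - (i + 1 : ℕ)) := by
  rw [← arcIncrement_succ_sub hS, ← arcIncrement_succ_succ_sub hS p k]
  abel

end Potential

section BalancedArcs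

lemma exists_symmDiff_eq_singleton {β : Type*} [DecidableEq β] {s t : Finset β} (hst : s ⊆ t)
    (hcard : t.card = s.card + 1) : ∃ v, symmDiff s t = {v} := by
  rw [← Finset.card_eq_one, symmDiff_of_le hst, Finset.card_sdiff_of_subset hst, hcard,
    Nat.add_sub_cancel_left]

variable {n : ℕ} {α : Type*} [AddCommGroup α] [LinearOrder α]

/-- The arcs of the cycle over which `w` sums to at most `M` in absolute value. The empty set counts
as an arc, and so does the whole cycle when `n ≠ 0`. -/
def IsBalancedArc (w : ZMod n → α) (M : α) (X : Finset (ZMod n)) : Prop :=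
  (∃ a m, X = cycleArc a m) ∧ |∑ v ∈ X, w v| ≤ M

/-- The graph whose edges join two balanced arcs that differ in a single vertex. Its walks are the
sequences of sets that the theorem asks for, except that they may pass through the empty set and the
whole cycle. -/
def balancedArcGraph (w : ZMod n → α) (M : α) : SimpleGraph (Finset (ZMod n)) where
  Adj X Y := IsBalancedArc w M X ∧ IsBalancedArc w M Y ∧ ∃ v, symmDiff X Y = {v}
  symm.symm := fun X Y ⟨hX, hY, hXY⟩ => ⟨hY, hX, symmDiff_comm X Y ▸ hXY⟩
  loopless.irrefl := by rintro X ⟨-, -, v, hv⟩; simp at hv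

lemma balancedArcGraph_adj_cycleArc {w : ZMod n → α} {M : α} {a b : ZMod n} {k : ℕ} (hk : k < n)
    (hsub : cycleArc a k ⊆ cycleArc b (k + 1)) (ha : |∑ v ∈ cycleArc a k, w v| ≤ M)
    (hb : |∑ v ∈ cycleArc b (k + 1), w v| ≤ M) :
    (balancedArcGraph w M).Adj (cycleArc a k) (cycleArc b (k + 1)) :=
  ⟨⟨⟨a, k, rfl⟩, ha⟩, ⟨⟨b, k + 1, rfl⟩, hb⟩,
    exists_symmDiff_eq_singleton hsub (by rw [card_cycleArc b hk, card_cycleArc a hk.le])⟩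

variable [IsOrderedAddMonoid α]

theorem balancedArcGraph_reachable_univ [NeZero n] {w : ZMod n → α} {M : α}
    (hsum : ∑ v, w v = 0) (hosc : ∀ u v, |w u - w v| ≤ M) :
    (balancedArcGraph w M).Reachable ∅ Finset.univ := by
  obtain ⟨S, hS⟩ := exists_eq_sub_of_sum_eq_zero hsum
  obtain ⟨p, hp⟩ := Finite.exists_min S
  have hw : ∀ v, |w v| ≤ M := abs_le_of_sum_eq_zero hsum hosc
  let R : ℕ × ℕ → Prop := fun v => (balancedArcGraph w M).Reachable ∅ (cycleArc (p - v.2) v.1)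
  have hR : ∀ k < n, ∀ i j : ℕ,
      cycleArc (p - (i : ZMod n)) k ⊆ cycleArc (p - (j : ZMod n)) (k + 1) →
      |arcIncrement S p (k, i)| ≤ M → |arcIncrement S p (k + 1, j)| ≤ M →
        (R (k, i) ↔ R (k + 1, j)) := by
    intro k hk i j hsub hi hj
    have hadj := balancedArcGraph_adj_cycleArc hk hsub
      ((sum_cycleArc_eq_arcIncrement hS p i hk.le).symm ▸ hi)
      ((sum_cycleArc_eq_arcIncrement hS p j hk).symm ▸ hj)
    exact ⟨fun h => h.trans hadj.reachable, fun h => h.trans hadj.symm.reachable⟩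
  obtain ⟨i, hi⟩ : ∃ i, R (n, i) := by
    refine exists_mem_row_of_triangular_array (f := arcIncrement S p) (M := M)
      ?_ ?_ ?_ ?_ ?_ ?_ ?_ ?_
    · exact fun k => by simpa [arcIncrement] using hp (p + k)
    · exact fun k => by simpa [arcIncrement] using hp (p - k)
    · exact fun k i => arcIncrement_sub_right hS p k i ▸ hosc _ _
    · exact fun k i => by rw [abs_sub_comm, arcIncrement_succ_sub hS]; exact hw _
    · exact fun k i => by rw [abs_sub_comm, arcIncrement_succ_succ_sub hS]; exact hw _
    · exact .refl _
    · exact fun k hk i => hR k hk i i (cycleArc_subset_succ _ k)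
    · exact fun k hk i => hR k hk i (i + 1)
        (sub_natCast_eq_sub_succ_add_one p i ▸ cycleArc_add_one_subset_succ _ k)
  exact cycleArc_eq_univ (p - (i : ZMod n)) ▸ hi

end BalancedArcs

theorem discrete_mountain_climbing_general (n : ℕ) [NeZero n] {𝕜 : Type*} [Field 𝕜]
    [LinearOrder 𝕜] [IsStrictOrderedRing 𝕜] (M : 𝕜) (ℓ : ZMod n → 𝕜)
    (hℓ : ∀ u v, |ℓ u - ℓ v| ≤ M) :
    ∃ (T : ℕ) (X : ℕ → Finset (ZMod n)),
      X 0 = ∅ ∧ X T = Finset.univ ∧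
      (∀ i, 0 < i → i < T → (X i).Nonempty ∧ X i ≠ Finset.univ ∧
        ∃ (a : ZMod n) (m : ℕ),
          X i = (Finset.range m).image (fun j : ℕ => a + (j : ZMod n))) ∧
      (∀ i < T, ∃ v : ZMod n, symmDiff (X i) (X (i + 1)) = {v}) ∧
      (∀ i ≤ T,
        |(∑ v ∈ X i, ℓ v) - ((X i).card : 𝕜) / (n : 𝕜) * (∑ v, ℓ v)| ≤ M) := by
  let w : ZMod n → 𝕜 := fun v => ℓ v - (∑ u, ℓ u) / n
  have hdev : ∀ X : Finset (ZMod n),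
      (∑ v ∈ X, ℓ v) - (X.card : 𝕜) / n * ∑ v, ℓ v = ∑ v ∈ X, w v := fun X => by
    simp only [w, Finset.sum_sub_distrib, Finset.sum_const, nsmul_eq_mul]
    ring
  have hsum : ∑ v, w v = 0 := by
    rw [← hdev, Finset.card_univ, ZMod.card, div_self (NeZero.ne (n : 𝕜)), one_mul, sub_self]
  have hosc : ∀ u v, |w u - w v| ≤ M := fun u v => by simpa [w] using hℓ u v
  obtain ⟨W, hW⟩ := (balancedArcGraph_reachable_univ hsum hosc).exists_isPath
  have hbalanced : ∀ i ≤ W.length, IsBalancedArc w M (W.getVert i)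
    | 0, _ => ⟨⟨0, 0, W.getVert_zero⟩, by simpa using hosc 0 0⟩
    | i + 1, hi => (W.adj_getVert_succ hi).2.1
  refine ⟨W.length, W.getVert, W.getVert_zero, W.getVert_length, fun i hi0 hiT => ⟨?_, ?_, ?_⟩,
    fun i hi => (W.adj_getVert_succ hi).2.2, fun i hi => hdev (W.getVert i) ▸ (hbalanced i hi).2⟩
  · exact Finset.nonempty_iff_ne_empty.2 fun h => hi0.ne' ((hW.getVert_eq_start_iff hiT.le).1 h)
  · exact fun h => hiT.ne ((hW.getVert_eq_end_iff hiT.le).1 h)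
  · exact (hbalanced i hiT.le).1

/-- Discrete mountain-climbing lemma (Lemma 7): given real labels of absolute value
at most `K` on the vertices of the cycle `Cₙ` (modelled as `ZMod n`) summing to `r`,
there is a sequence of subsets from `∅` to the whole vertex set, each intermediate set
being a nonempty proper arc of the cycle, consecutive sets differing in a single
vertex, and each partial sum staying within `2K` of its proportional share of `r`. -/
theorem discrete_mountain_climbing (n : ℕ) [NeZero n] (K : ℝ) (hK : 0 ≤ K)
    (ℓ : ZMod n → ℝ) (hℓ : ∀ v, |ℓ v| ≤ K) :
    ∃ (T : ℕ) (X : ℕ → Finset (ZMod n)),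
      X 0 = ∅ ∧ X T = Finset.univ ∧
      (∀ i, 0 < i → i < T → (X i).Nonempty ∧ X i ≠ Finset.univ ∧
        ∃ (a : ZMod n) (m : ℕ),
          X i = (Finset.range m).image (fun j : ℕ => a + (j : ZMod n))) ∧
      (∀ i < T, ∃ v : ZMod n, symmDiff (X i) (X (i + 1)) = {v}) ∧
      (∀ i ≤ T,
        |(∑ v ∈ X i, ℓ v) - ((X i).card : ℝ) / (n : ℝ) * (∑ v, ℓ v)| ≤ 2 * K) := by
  exact discrete_mountain_climbing_general n (2 * K) ℓ fun u v =>
    (abs_sub (ℓ u) (ℓ v)).trans (by linarith [hℓ u, hℓ v])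
end

section
/- For every ε > 0 and integer B ≥ 1, there exist an integer K, a real δ > 0, and N such that the following holds: for every k×ℓ grid graph G with n = kℓ ≥ N vertices, and every partition ω of V(G) into nonempty parts each of size at most B and each inducing a connected subgraph of G, if the number of parts of ω is at least (1+ε)·n/B, then there exist at least δ·n distinct partitions of V(G) into nonempty parts of size at most B each inducing a connected subgraph of G, each having strictly fewer parts than ω, and each agreeing with ω on all vertices outside some set of at most K vertices that induces a connected subgraph of G. -/
/-- The `k × ℓ` grid graph: vertices `{0,…,k-1} × {0,…,ℓ-1}`, two vertices adjacent
iff they differ by exactly 1 in one coordinate and agree in the other. -/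
def gridGraph (k l : ℕ) : SimpleGraph (Fin k × Fin l) :=
  SimpleGraph.fromRel (fun a b =>
    (a.1 = b.1 ∧ a.2.val + 1 = b.2.val) ∨ (a.2 = b.2 ∧ a.1.val + 1 = b.1.val))

/-- `ω` is a partition of the vertex set of `G` into nonempty parts of size at most
`B`, each inducing a connected subgraph of `G`. -/
def IsBoundedConnPartition {V : Type*} (G : SimpleGraph V) (B : ℕ)
    (ω : Finset (Finset V)) : Prop :=
  (∀ s ∈ ω, s.Nonempty) ∧
  (∀ v : V, ∃! s, s ∈ ω ∧ v ∈ s) ∧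
  (∀ s ∈ ω, s.card ≤ B) ∧
  (∀ s ∈ ω, (G.induce (s : Set V)).Connected)

/-- Two partitions agree on all vertices outside `S`: the induced "same part"
relations coincide on the complement of `S`. -/
def AgreeOutside {V : Type*} (ω ω' : Finset (Finset V)) (S : Finset V) : Prop :=
  ∀ u v : V, u ∉ S → v ∉ S →
    ((∃ s ∈ ω, u ∈ s ∧ v ∈ s) ↔ (∃ s ∈ ω', u ∈ s ∧ v ∈ s))

/-!
Cut the grid into blocks of side `M`. The vertices at which a new row or column of blocks begins
form a seam of `O(n / M)` vertices, so all but `O(n / M)` parts of a partition lie within a single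
block. If the partition has `(1 + ε) n / B` parts and `M` is large, then for a positive proportion
of the blocks `R` the number of parts within `R` exceeds `#R / B` by more than `B` times the number
of parts crossing the boundary of `R`. Such a block has a Hamiltonian path, which sweeps it in
alternating directions; cutting this path into segments of length `B` repartitions `R` into fewer
than `#R / B + 1` parts. The rest of each part crossing the boundary of `R` is shattered into
singletons, which costs less than what is gained inside `R`. The change is confined to the union of
the parts meeting `R`, and different blocks yield different partitions.
-/

open Finset SimpleGraph

section Traceable

variable {V W : Type*} {G : SimpleGraph V} {H : SimpleGraph W}

/-- `s` is the vertex set of a path of `G`, i.e. the subgraph induced on `s` has a Hamiltonian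
path. The path is recorded as the list of its vertices. -/
def IsTraceable (G : SimpleGraph V) (s : Finset V) : Prop :=
  ∃ p : List V, p ≠ [] ∧ p.IsChain G.Adj ∧ p.Nodup ∧ ∀ v, v ∈ p ↔ v ∈ s

lemma connected_induce_of_isChain {p : List V} (hne : p ≠ []) (hp : p.IsChain G.Adj) :
    (G.induce {v | v ∈ p}).Connected := by
  have h := (Walk.ofSupport p hne hp).connected_induce_support
  rwa [Walk.support_ofSupport] at h

lemma IsTraceable.connected {s : Finset V} (hs : IsTraceable G s) :
    (G.induce (s : Set V)).Connected := by
  obtain ⟨p, hne, hchain, -, hmem⟩ := hs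
  have hset : (s : Set V) = {v | v ∈ p} := Set.ext fun v ↦ (hmem v).symm
  rw [hset]
  exact connected_induce_of_isChain hne hchain

lemma isTraceable_hasse_of_ordConnected {α : Type*} [LinearOrder α] {s : Finset α}
    (hne : s.Nonempty) (hs : (s : Set α).OrdConnected) : IsTraceable (hasse α) s := by
  refine ⟨s.sort, by simpa [← List.toFinset_eq_empty_iff] using hne.ne_empty, ?_,
    s.sort_nodup _, fun v ↦ s.mem_sort _⟩
  rw [List.isChain_iff_forall_rel_of_append_cons_cons]
  intro a b l₁ l₂ hsort
  have hmem : ∀ c, c ∈ s ↔ c ∈ l₁ ++ a :: b :: l₂ := fun c ↦ by rw [← hsort, s.mem_sort]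
  have hlt : (l₁ ++ a :: b :: l₂).Pairwise (· < ·) := hsort ▸ s.sortedLT_sort.pairwise
  simp only [List.pairwise_append, List.pairwise_cons, List.mem_cons] at hlt
  obtain ⟨-, ⟨ha, hb, -⟩, hl₁⟩ := hlt
  refine Or.inl ⟨ha b (.inl rfl), fun c hac hcb ↦ ?_⟩
  have hc : c ∈ s := hs.out ((hmem a).2 (by simp)) ((hmem b).2 (by simp)) ⟨hac.le, hcb.le⟩
  rw [hmem, List.mem_append, List.mem_cons, List.mem_cons] at hc
  obtain hc | rfl | rfl | hc := hc
  · exact lt_asymm hac (hl₁ c hc a (.inl rfl))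
  · exact lt_irrefl c hac
  · exact lt_irrefl c hcb
  · exact lt_asymm hcb (hb c hc)

/-- The boustrophedon enumeration of a product: the second coordinate runs through `q`
alternately forwards and backwards while the first coordinate runs through `p`. -/
def snake : List V → List W → List (V × W)
  | [], _ => []
  | a :: p, q => q.map (a, ·) ++ snake p q.reverse

lemma mem_snake {p : List V} {q : List W} {v : V × W} : v ∈ snake p q ↔ v.1 ∈ p ∧ v.2 ∈ q := by
  induction p generalizing q with
  | nil => simp [snake]
  | cons a p ih =>
    obtain ⟨x, y⟩ := v
    simp only [snake, List.mem_append, List.mem_map, ih, List.mem_reverse, List.mem_cons,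
      Prod.mk.injEq]
    grind

lemma head?_snake_cons (a : V) (p : List V) (q : List W) :
    (snake (a :: p) q).head? = q.head?.map (a, ·) := by
  induction p generalizing a q with
  | nil => simp [snake]
  | cons b p ih =>
    rw [snake, List.head?_append, ih, List.head?_map, List.head?_reverse]
    cases q <;> simp

lemma nodup_snake {p : List V} {q : List W} (hp : p.Nodup) (hq : q.Nodup) :
    (snake p q).Nodup := by
  induction p generalizing q with
  | nil => exact List.nodup_nil
  | cons a p ih =>
    rw [List.nodup_cons] at hp
    refine (hq.map (Prod.mk_right_injective a)).append (ih hp.2 (List.nodup_reverse.2 hq)) ?_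
    intro v hv hv'
    obtain ⟨b, -, rfl⟩ := List.mem_map.1 hv
    exact hp.1 (mem_snake.1 hv').1

lemma isChain_snake {p : List V} {q : List W} (hp : p.IsChain G.Adj) (hq : q.IsChain H.Adj) :
    (snake p q).IsChain (G □ H).Adj := by
  induction p generalizing q with
  | nil => exact List.isChain_nil
  | cons a p ih =>
    have hrev : q.reverse.IsChain H.Adj :=
      List.isChain_reverse.2 (hq.imp fun _ _ h ↦ h.symm)
    refine List.IsChain.append ?_ (ih hp.tail hrev) ?_
    · exact List.isChain_map_of_isChain _ (fun _ _ h ↦ boxProd_adj_right.2 h) hq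
    · intro x hx y hy
      cases p with
      | nil => simp [snake] at hy
      | cons b p =>
        rw [head?_snake_cons, List.head?_reverse] at hy
        rw [List.getLast?_map] at hx
        obtain ⟨c, hc, rfl⟩ := Option.map_eq_some_iff.1 hx
        obtain ⟨d, hd, rfl⟩ := Option.map_eq_some_iff.1 hy
        obtain rfl : c = d := Option.some_injective _ (hc.symm.trans hd)
        exact boxProd_adj_left.2 (List.isChain_cons_cons.1 hp).1

lemma IsTraceable.boxProd {s : Finset V} {t : Finset W} (hs : IsTraceable G s)
    (ht : IsTraceable H t) : IsTraceable (G □ H) (s ×ˢ t) := by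
  obtain ⟨p, hp, hpchain, hpnodup, hpmem⟩ := hs
  obtain ⟨q, hq, hqchain, hqnodup, hqmem⟩ := ht
  obtain ⟨a, ha⟩ := List.exists_mem_of_ne_nil p hp
  obtain ⟨b, hb⟩ := List.exists_mem_of_ne_nil q hq
  refine ⟨snake p q, List.ne_nil_of_mem (mem_snake (v := (a, b)).2 ⟨ha, hb⟩),
    isChain_snake hpchain hqchain, nodup_snake hpnodup hqnodup, fun v ↦ ?_⟩
  rw [mem_snake, hpmem, hqmem, mem_product]

end Traceable

section BoundedConn

variable {V : Type*} [DecidableEq V] {G : SimpleGraph V} {B : ℕ}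

/-- Every part of the partition `P` of the vertex set `s` has at most `B` vertices and induces a
connected subgraph of `G`. This is `IsBoundedConnPartition` relative to a set of vertices. -/
def IsBoundedConn (G : SimpleGraph V) (B : ℕ) {s : Finset V} (P : Finpartition s) : Prop :=
  ∀ t ∈ P.parts, #t ≤ B ∧ (G.induce (t : Set V)).Connected

lemma isBoundedConnPartition_iff_exists_finpartition [Fintype V] {ω : Finset (Finset V)} :
    IsBoundedConnPartition G B ω ↔
      ∃ P : Finpartition (univ : Finset V), P.parts = ω ∧ IsBoundedConn G B P := by
  constructor
  · rintro ⟨hne, huniq, hcard, hconn⟩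
    refine ⟨.ofExistsUnique ω (fun _ _ ↦ subset_univ _) (fun v _ ↦ huniq v)
      fun h ↦ (hne ∅ h).ne_empty rfl, rfl, fun t ht ↦ ⟨hcard t ht, hconn t ht⟩⟩
  · rintro ⟨P, rfl, hP⟩
    exact ⟨fun _ ↦ P.nonempty_of_mem_parts, fun v ↦ P.existsUnique_mem (mem_univ v),
      fun t ht ↦ (hP t ht).1, fun t ht ↦ (hP t ht).2⟩

lemma isBoundedConn_bot (hB : 0 < B) (s : Finset V) :
    IsBoundedConn G B (⊥ : Finpartition s) := by
  intro t ht
  obtain ⟨v, -, rfl⟩ := Finpartition.mem_bot_iff.1 ht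
  refine ⟨by rwa [card_singleton], ?_⟩
  rw [coe_singleton, induce_singleton_eq_top]
  exact connected_top

lemma exists_isBoundedConn_of_isChain (hB : 0 < B) {p : List V} (hp : p.IsChain G.Adj)
    (hnodup : p.Nodup) :
    ∃ Q : Finpartition p.toFinset, IsBoundedConn G B Q ∧ B * #Q.parts < p.length + B := by
  induction hn : p.length using Nat.strong_induction_on generalizing p with
  | _ n ih =>
    obtain rfl | hne := eq_or_ne p []
    · exact ⟨⊥, isBoundedConn_bot hB _, by
        rw [Finpartition.card_bot, List.toFinset_nil, card_empty]; lia⟩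
    have hpos : 0 < p.length := List.length_pos_of_ne_nil hne
    have htake : p.take B ≠ [] := by simp [hne, hB.ne']
    obtain ⟨Q, hQ, hcard⟩ := ih _ (by rw [List.length_drop]; lia) (hp.drop B)
      (hnodup.sublist (List.drop_sublist B p)) rfl
    have hdisj : Disjoint (p.drop B).toFinset (p.take B).toFinset := by
      rw [List.disjoint_toFinset_iff_disjoint]
      exact (List.disjoint_take_drop hnodup le_rfl).symm
    have hunion : (p.drop B).toFinset ∪ (p.take B).toFinset = p.toFinset := by
      rw [union_comm, ← List.toFinset_append, List.take_append_drop]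
    refine ⟨Q.extend (by simpa using htake) hdisj hunion, ?_, ?_⟩
    · intro t ht
      obtain rfl | ht := mem_insert.1 ht
      · refine ⟨(List.toFinset_card_le _).trans (List.length_take_le B p), ?_⟩
        rw [List.coe_toFinset]
        exact connected_induce_of_isChain htake (hp.take B)
      · exact hQ t ht
    · rw [Finpartition.card_extend, mul_add_one]
      rw [List.length_drop] at hcard
      by_cases hlen : #Q.parts = 0
      · rw [hlen]; lia
      · have := Nat.mul_le_mul_left B (Nat.one_le_iff_ne_zero.2 hlen)
        lia

lemma IsTraceable.exists_isBoundedConn (hB : 0 < B) {s : Finset V} (hs : IsTraceable G s) :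
    ∃ Q : Finpartition s, IsBoundedConn G B Q ∧ B * #Q.parts < #s + B := by
  obtain ⟨p, -, hchain, hnodup, hmem⟩ := hs
  obtain rfl : p.toFinset = s := by ext v; rw [List.mem_toFinset, hmem]
  rw [List.toFinset_card_of_nodup hnodup]
  exact exists_isBoundedConn_of_isChain hB hchain hnodup

end BoundedConn

section Surgery

/-- The partition of `a ⊔ b` whose parts are those of a partition of `a` together with those of a
partition of `b`. -/
def finpartitionDisjSup {α : Type*} [Lattice α] [OrderBot α] [IsModularLattice α] [DecidableEq α]
    {a b : α} (P : Finpartition a) (Q : Finpartition b) (hab : Disjoint a b) :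
    Finpartition (a ⊔ b) where
  parts := P.parts ∪ Q.parts
  supIndep := P.supIndep.union Q.supIndep (by rwa [P.sup_parts, Q.sup_parts])
  sup_parts := by rw [sup_union, P.sup_parts, Q.sup_parts]
  bot_notMem h := (mem_union.1 h).elim P.bot_notMem Q.bot_notMem

variable {V : Type*} [DecidableEq V] {G : SimpleGraph V} {B : ℕ} {A : Finset V}

/-- The parts of `P` that have a vertex in `R`. -/
def partsMeeting (P : Finpartition A) (R : Finset V) : Finset (Finset V) :=
  {s ∈ P.parts | ¬Disjoint s R}

/-- The parts of `P` that lie entirely in `R`. -/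
def partsWithin (P : Finpartition A) (R : Finset V) : Finset (Finset V) :=
  {s ∈ P.parts | s ⊆ R}

/-- The parts of `P` that have a vertex in `R` and a vertex outside `R`. -/
def partsCrossing (P : Finpartition A) (R : Finset V) : Finset (Finset V) :=
  {s ∈ partsMeeting P R | ¬s ⊆ R}

/-- The union of the parts of `P` that have a vertex in `R`: the region affected by a surgery
on `R`. -/
def partsStar (P : Finpartition A) (R : Finset V) : Finset V :=
  (partsMeeting P R).biUnion id

lemma mem_partsStar {P : Finpartition A} {R : Finset V} {v : V} :
    v ∈ partsStar P R ↔ ∃ s ∈ P.parts, ¬Disjoint s R ∧ v ∈ s := by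
  simp only [partsStar, partsMeeting, mem_biUnion, mem_filter, id, and_assoc]

lemma card_partsMeeting_le (P : Finpartition A) (R : Finset V) : #(partsMeeting P R) ≤ #R := by
  suffices h : partsMeeting P R ⊆ R.image P.part from (card_le_card h).trans card_image_le
  intro s hs
  obtain ⟨hsP, hsR⟩ := mem_filter.1 hs
  obtain ⟨v, hvs, hvR⟩ := not_disjoint_iff.1 hsR
  exact mem_image.2 ⟨v, hvR, P.part_eq_of_mem hsP hvs⟩

lemma filter_partsMeeting_eq_partsWithin (P : Finpartition A) (R : Finset V) :
    {s ∈ partsMeeting P R | s ⊆ R} = partsWithin P R := by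
  ext s
  simp only [partsMeeting, partsWithin, mem_filter, and_assoc]
  refine and_congr_right fun hs ↦ and_iff_right_of_imp fun hsR hdisj ↦ ?_
  exact (P.nonempty_of_mem_parts hs).ne_empty (disjoint_self.1 (hdisj.mono_right hsR))

lemma card_partsWithin_add_card_partsCrossing (P : Finpartition A) (R : Finset V) :
    #(partsWithin P R) + #(partsCrossing P R) = #(partsMeeting P R) := by
  rw [← filter_partsMeeting_eq_partsWithin, partsCrossing, card_filter_add_card_filter_not]

lemma card_partsWithin_le (P : Finpartition A) (R : Finset V) : #(partsWithin P R) ≤ #R := by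
  have := card_partsWithin_add_card_partsCrossing P R
  have := card_partsMeeting_le P R
  lia

lemma IsBoundedConn.card_partsStar_le {P : Finpartition A} (hP : IsBoundedConn G B P)
    (R : Finset V) : #(partsStar P R) ≤ #R * B :=
  (card_biUnion_le_card_mul _ _ _ fun s hs ↦ (hP s (mem_filter.1 hs).1).1).trans
    (Nat.mul_le_mul_right B (card_partsMeeting_le P R))

lemma IsBoundedConn.card_partsStar_sdiff_le {P : Finpartition A} (hP : IsBoundedConn G B P)
    (R : Finset V) : #(partsStar P R \ R) ≤ #(partsCrossing P R) * B := by
  have hsub : partsStar P R \ R ⊆ (partsCrossing P R).biUnion id := by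
    intro v hv
    obtain ⟨hvstar, hvR⟩ := mem_sdiff.1 hv
    obtain ⟨s, hs, hvs⟩ := mem_biUnion.1 hvstar
    exact mem_biUnion.2 ⟨s, mem_filter.2 ⟨hs, fun hsR ↦ hvR (hsR hvs)⟩, hvs⟩
  refine (card_le_card hsub).trans (card_biUnion_le_card_mul _ _ _ fun s hs ↦ ?_)
  exact (hP s (mem_filter.1 (mem_filter.1 hs).1).1).1

variable [Fintype V] {P : Finpartition (univ : Finset V)} {R : Finset V}

lemma subset_partsStar : R ⊆ partsStar P R := fun v hv ↦
  have hvpart : v ∈ P.part v := P.mem_part (mem_univ v)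
  mem_partsStar.2 ⟨P.part v, P.part_mem.2 (mem_univ v), not_disjoint_iff.2 ⟨v, hvpart, hv⟩, hvpart⟩

lemma IsBoundedConn.connected_partsStar (hP : IsBoundedConn G B P)
    (hR : (G.induce (R : Set V)).Connected) : (G.induce (partsStar P R : Set V)).Connected := by
  obtain ⟨u, hu⟩ := hR.nonempty
  refine induce_connected_of_patches u (subset_partsStar hu) fun {v} hv ↦ ?_
  obtain ⟨s, hs, hsR, hvs⟩ := mem_partsStar.1 hv
  have hsub : s ⊆ partsStar P R := fun w hw ↦ mem_partsStar.2 ⟨s, hs, hsR, hw⟩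
  obtain ⟨w, hws, hwR⟩ := not_disjoint_iff.1 hsR
  have hconn : (G.induce (R ∪ s : Set V)).Connected :=
    induce_union_connected hR.preconnected (hP s hs).2.preconnected ⟨w, hwR, hws⟩
  exact ⟨R ∪ s, Set.union_subset subset_partsStar hsub, .inl hu, .inr hvs, hconn _ _⟩

lemma sup_filter_disjoint_parts (P : Finpartition (univ : Finset V)) (R : Finset V) :
    {s ∈ P.parts | Disjoint s R}.sup id = univ \ partsStar P R := by
  ext v
  obtain ⟨s, hs, hvs⟩ := P.exists_mem (mem_univ v)
  simp only [mem_sup, mem_filter, id, mem_sdiff, mem_univ, true_and, mem_partsStar, not_exists,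
    not_and]
  constructor
  · rintro ⟨t, ⟨ht, htR⟩, hvt⟩ t' ht' ht'R hvt'
    exact ht'R (P.eq_of_mem_parts ht ht' hvt hvt' ▸ htR)
  · exact fun h ↦ ⟨s, ⟨hs, by_contra fun hsR ↦ h s hs hsR hvs⟩, hvs⟩

/-- Repartition `R` by `Q`, shatter the rest of the parts of `P` meeting `R` into singletons, and
keep the remaining parts of `P`. -/
def surgery (P : Finpartition (univ : Finset V)) (Q : Finpartition R) :
    Finpartition (univ : Finset V) :=
  have hdisj : Disjoint R (partsStar P R \ R) := disjoint_sdiff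
  have hunion : R ⊔ partsStar P R \ R = partsStar P R := union_sdiff_of_subset subset_partsStar
  (finpartitionDisjSup (P.ofSubset (filter_subset _ _) (sup_filter_disjoint_parts P R))
    (finpartitionDisjSup Q (⊥ : Finpartition (partsStar P R \ R)) hdisj)
    (by rw [hunion]; exact sdiff_disjoint)).copy
    (by rw [hunion]; exact sdiff_union_of_subset (subset_univ _))

lemma parts_surgery (P : Finpartition (univ : Finset V)) (Q : Finpartition R) :
    (surgery P Q).parts = {s ∈ P.parts | Disjoint s R} ∪
      (Q.parts ∪ (⊥ : Finpartition (partsStar P R \ R)).parts) :=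
  rfl

lemma isBoundedConn_surgery {Q : Finpartition R} (hB : 0 < B) (hP : IsBoundedConn G B P)
    (hQ : IsBoundedConn G B Q) : IsBoundedConn G B (surgery P Q) := by
  intro s hs
  rw [parts_surgery, mem_union, mem_union] at hs
  obtain hs | hs | hs := hs
  · exact hP s (mem_filter.1 hs).1
  · exact hQ s hs
  · exact isBoundedConn_bot hB _ s hs

lemma IsBoundedConn.card_parts_surgery_lt {Q : Finpartition R} (hP : IsBoundedConn G B P)
    (hQ : #Q.parts + #(partsCrossing P R) * B < #(partsWithin P R)) :
    #(surgery P Q).parts < #P.parts := by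
  have hmeet := card_partsWithin_add_card_partsCrossing P R
  have hsplit : #{s ∈ P.parts | Disjoint s R} + #(partsMeeting P R) = #P.parts :=
    card_filter_add_card_filter_not _
  calc #(surgery P Q).parts
      ≤ #{s ∈ P.parts | Disjoint s R} + (#Q.parts + #(partsStar P R \ R)) := by
        rw [parts_surgery, ← Finpartition.card_bot (partsStar P R \ R)]
        exact (card_union_le _ _).trans (Nat.add_le_add_left (card_union_le _ _) _)
    _ < #P.parts := by
        have := hP.card_partsStar_sdiff_le R
        lia

lemma agreeOutside_surgery (P : Finpartition (univ : Finset V)) (Q : Finpartition R) :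
    AgreeOutside P.parts (surgery P Q).parts (partsStar P R) := by
  intro u v hu _
  refine exists_congr fun s ↦ and_congr_left fun ⟨hus, _⟩ ↦ ⟨fun hs ↦ ?_, fun hs ↦ ?_⟩
  · have hsR : Disjoint s R := by_contra fun hsR ↦ hu (mem_partsStar.2 ⟨s, hs, hsR, hus⟩)
    exact mem_union_left _ (mem_filter.2 ⟨hs, hsR⟩)
  · rw [parts_surgery, mem_union, mem_union] at hs
    obtain hs | hs | hs := hs
    · exact (mem_filter.1 hs).1
    · exact absurd (subset_partsStar (Q.subset hs hus)) hu
    · exact absurd (sdiff_subset (Finpartition.subset _ hs hus)) hu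

lemma parts_surgery_ne {R' : Finset V} {Q : Finpartition R} {Q' : Finpartition R'}
    (hdisj : Disjoint R R') (hQ : #Q.parts < #(partsWithin P R)) :
    (surgery P Q).parts ≠ (surgery P Q').parts := by
  obtain ⟨s, hs, hsQ⟩ := exists_mem_notMem_of_card_lt_card hQ
  obtain ⟨hsP, hsR⟩ := mem_filter.1 hs
  obtain ⟨v, hv⟩ := P.nonempty_of_mem_parts hsP
  intro heq
  have hs' : s ∈ (surgery P Q).parts :=
    heq ▸ mem_union_left _ (mem_filter.2 ⟨hsP, hdisj.mono_left hsR⟩)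
  rw [parts_surgery, mem_union, mem_union] at hs'
  obtain hs' | hs' | hs' := hs'
  · exact disjoint_left.1 (mem_filter.1 hs').2 hv (hsR hv)
  · exact hsQ hs'
  · exact (mem_sdiff.1 (Finpartition.subset _ hs' hv)).2 (hsR hv)

end Surgery

section Tiling

lemma apply_eq_of_preconnected_induce {V ι : Type*} {G : SimpleGraph V} {s : Set V} {f : V → ι}
    (hs : (G.induce s).Preconnected) (hf : ∀ u ∈ s, ∀ v ∈ s, G.Adj u v → f u = f v)
    {u v : V} (hu : u ∈ s) (hv : v ∈ s) : f u = f v := by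
  obtain ⟨p⟩ := hs ⟨u, hu⟩ ⟨v, hv⟩
  suffices h : ∀ {x y : s}, (G.induce s).Walk x y → f x = f y from h p
  intro x y q
  induction q with
  | nil => rfl
  | cons hadj _ ih => exact (hf _ (Subtype.coe_prop _) _ (Subtype.coe_prop _) hadj).trans ih

variable {V ι : Type*} [Fintype V] [DecidableEq ι] {G : SimpleGraph V} {τ : V → ι} {D : Finset V}

/-- The vertices with label `a`. A labelling `τ` encodes a tiling of the vertex set, the tiles being
the fibres of `τ`. -/
def tile (τ : V → ι) (a : ι) : Finset V :=
  {v | τ v = a}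

/-- `D` is a seam of the tiling `τ`: an edge between different tiles has an endpoint in `D`. -/
def IsSeam (G : SimpleGraph V) (τ : V → ι) (D : Finset V) : Prop :=
  ∀ u v, G.Adj u v → u ∉ D → v ∉ D → τ u = τ v

lemma mem_tile {a : ι} {v : V} : v ∈ tile τ a ↔ τ v = a := by
  simp only [tile, mem_filter, mem_univ, true_and]

lemma disjoint_tile {a b : ι} (hab : a ≠ b) : Disjoint (tile τ a) (tile τ b) :=
  disjoint_left.2 fun _ ha hb ↦ hab ((mem_tile.1 ha).symm.trans (mem_tile.1 hb))

lemma IsSeam.subset_tile (hD : IsSeam G τ D) {s : Finset V}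
    (hs : (G.induce (s : Set V)).Connected) (hsD : Disjoint s D) {v : V} (hv : v ∈ s) :
    s ⊆ tile τ (τ v) := fun _ hw ↦ mem_tile.2 <|
  apply_eq_of_preconnected_induce hs.preconnected
    (fun _ hx _ hy hxy ↦ hD _ _ hxy (disjoint_left.1 hsD hx) (disjoint_left.1 hsD hy)) hw hv

variable [DecidableEq V] {B m : ℕ} {P : Finpartition (univ : Finset V)} {R : Finset V}

lemma IsSeam.card_parts_le (hD : IsSeam G τ D) (hP : IsBoundedConn G B P) :
    #P.parts ≤ ∑ a ∈ univ.image τ, #(partsWithin P (tile τ a)) + #(partsMeeting P D) := by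
  have hcover : P.parts ⊆
      (univ.image τ).biUnion (fun a ↦ partsWithin P (tile τ a)) ∪ partsMeeting P D := by
    intro s hs
    by_cases hsD : Disjoint s D
    · obtain ⟨v, hv⟩ := P.nonempty_of_mem_parts hs
      exact mem_union_left _ <| mem_biUnion.2 ⟨τ v, mem_image_of_mem τ (mem_univ v),
        mem_filter.2 ⟨hs, hD.subset_tile (hP s hs).2 hsD hv⟩⟩
    · exact mem_union_right _ (mem_filter.2 ⟨hs, hsD⟩)
  calc #P.parts ≤ _ := card_le_card hcover
    _ ≤ _ := card_union_le _ _
    _ ≤ _ := Nat.add_le_add_right card_biUnion_le _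

lemma IsSeam.partsCrossing_tile_subset (hD : IsSeam G τ D) (hP : IsBoundedConn G B P) (a : ι) :
    partsCrossing P (tile τ a) ⊆ {s ∈ partsMeeting P D | a ∈ s.image τ} := by
  intro s hs
  obtain ⟨hmeet, hsub⟩ := mem_filter.1 hs
  obtain ⟨hsP, hmeet⟩ := mem_filter.1 hmeet
  obtain ⟨v, hvs, hva⟩ := not_disjoint_iff.1 hmeet
  obtain rfl := mem_tile.1 hva
  have hsD : ¬Disjoint s D := fun hsD ↦ hsub (hD.subset_tile (hP s hsP).2 hsD hvs)
  exact mem_filter.2 ⟨mem_filter.2 ⟨hsP, hsD⟩, mem_image_of_mem τ hvs⟩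

lemma IsSeam.sum_card_partsCrossing_le (hD : IsSeam G τ D) (hP : IsBoundedConn G B P)
    (I : Finset ι) : ∑ a ∈ I, #(partsCrossing P (tile τ a)) ≤ B * #D := by
  calc ∑ a ∈ I, #(partsCrossing P (tile τ a))
      ≤ ∑ a ∈ I, #{s ∈ partsMeeting P D | a ∈ s.image τ} :=
        sum_le_sum fun a _ ↦ card_le_card (hD.partsCrossing_tile_subset hP a)
    _ = ∑ s ∈ partsMeeting P D, #{a ∈ I | a ∈ s.image τ} := by
        simp only [card_filter, sum_comm (s := I)]
    _ ≤ ∑ _ ∈ partsMeeting P D, B := sum_le_sum fun s hs ↦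
        (card_le_card fun _ ha ↦ (mem_filter.1 ha).2).trans <|
          card_image_le.trans (hP s (mem_filter.1 hs).1).1
    _ ≤ B * #D := by
        rw [sum_const, smul_eq_mul, mul_comm]
        exact Nat.mul_le_mul_left B (card_partsMeeting_le P D)

/-- `P` has so many parts within `R` that cutting `R` afresh into fewer than `#R / B + 1` parts and
shattering the parts that cross the boundary of `R`, at most `B` vertices each, lowers the number of
parts. The inequality is multiplied by `B` to avoid division. -/
def IsWasteful (B : ℕ) (P : Finpartition (univ : Finset V)) (R : Finset V) : Prop :=
  #R + B + B * (#(partsCrossing P R) * B) ≤ B * #(partsWithin P R)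

instance : DecidablePred (IsWasteful B P) := fun _ ↦ Nat.decLe _ _

lemma IsWasteful.exists_isBoundedConn (hw : IsWasteful B P R) (hB : 0 < B)
    (hR : IsTraceable G R) :
    ∃ Q : Finpartition R, IsBoundedConn G B Q ∧
      #Q.parts + #(partsCrossing P R) * B < #(partsWithin P R) := by
  obtain ⟨Q, hQ, hcard⟩ := hR.exists_isBoundedConn hB
  refine ⟨Q, hQ, Nat.lt_of_mul_lt_mul_left (a := B) ?_⟩
  rw [mul_add]
  exact (Nat.add_lt_add_right hcard _).trans_le hw

lemma IsSeam.card_parts_le_of_isWasteful (hD : IsSeam G τ D) (hP : IsBoundedConn G B P)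
    (hm : ∀ a, #(tile τ a) ≤ m) :
    B * #P.parts ≤ B * m * #{a ∈ univ.image τ | IsWasteful B P (tile τ a)} + Fintype.card V +
      B * #(univ.image τ) + (B ^ 3 + B) * #D := by
  set I := univ.image τ
  have htile : ∀ a ∈ I, B * #(partsWithin P (tile τ a)) ≤
      (if IsWasteful B P (tile τ a) then B * m else 0) + #(tile τ a) + B +
        B ^ 2 * #(partsCrossing P (tile τ a)) := by
    intro a _
    split_ifs with hw
    · have := Nat.mul_le_mul_left B ((card_partsWithin_le P (tile τ a)).trans (hm a))
      lia
    · rw [IsWasteful] at hw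
      linarith
  have hcard : ∑ a ∈ I, #(tile τ a) = Fintype.card V :=
    (card_eq_sum_card_image τ univ).symm
  calc B * #P.parts
      ≤ B * (∑ a ∈ I, #(partsWithin P (tile τ a)) + #D) := Nat.mul_le_mul_left B <|
        (hD.card_parts_le hP).trans (Nat.add_le_add_left (card_partsMeeting_le P D) _)
    _ = ∑ a ∈ I, B * #(partsWithin P (tile τ a)) + B * #D := by rw [mul_add, mul_sum]
    _ ≤ B * m * #{a ∈ I | IsWasteful B P (tile τ a)} + Fintype.card V + B * #I +
        B ^ 2 * ∑ a ∈ I, #(partsCrossing P (tile τ a)) + B * #D := by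
        refine Nat.add_le_add_right ((sum_le_sum htile).trans_eq ?_) _
        rw [sum_add_distrib, sum_add_distrib, sum_add_distrib, hcard, ← mul_sum, ← sum_filter,
          sum_const, sum_const, smul_eq_mul, smul_eq_mul, mul_comm (B * m), mul_comm B #I]
    _ ≤ _ := by
        have := Nat.mul_le_mul_left (B ^ 2) (hD.sum_card_partsCrossing_le hP I)
        linarith

/-- `ω'` is a `B`-bounded connected partition with fewer parts than `ω` that differs from `ω` only
inside a connected set of at most `K` vertices. -/
def IsLocalImprovement (G : SimpleGraph V) (B K : ℕ) (ω ω' : Finset (Finset V)) : Prop :=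
  IsBoundedConnPartition G B ω' ∧ #ω' < #ω ∧
    ∃ S : Finset V, #S ≤ K ∧ (G.induce (S : Set V)).Connected ∧ AgreeOutside ω ω' S

lemma isLocalImprovement_surgery {Q : Finpartition R} (hB : 0 < B) (hP : IsBoundedConn G B P)
    (hQ : IsBoundedConn G B Q) (hR : (G.induce (R : Set V)).Connected)
    (hlt : #Q.parts + #(partsCrossing P R) * B < #(partsWithin P R)) :
    IsLocalImprovement G B (#R * B) P.parts (surgery P Q).parts :=
  ⟨isBoundedConnPartition_iff_exists_finpartition.2
      ⟨surgery P Q, rfl, isBoundedConn_surgery hB hP hQ⟩,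
    hP.card_parts_surgery_lt hlt, partsStar P R, hP.card_partsStar_le R,
    hP.connected_partsStar hR, agreeOutside_surgery P Q⟩

lemma exists_isLocalImprovement_of_isWasteful (hB : 0 < B) (hP : IsBoundedConn G B P)
    (I : Finset ι) (htrace : ∀ a ∈ I, IsTraceable G (tile τ a)) (hm : ∀ a ∈ I, #(tile τ a) ≤ m)
    (hI : ∀ a ∈ I, IsWasteful B P (tile τ a)) :
    ∃ W : Finset (Finset (Finset V)), #W = #I ∧
      ∀ ω ∈ W, IsLocalImprovement G B (m * B) P.parts ω := by
  choose! Q hQ hlt using fun a ha ↦ (hI a ha).exists_isBoundedConn hB (htrace a ha)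
  refine ⟨I.image fun a ↦ (surgery P (Q a)).parts, card_image_of_injOn fun a ha b _ hab ↦ ?_, ?_⟩
  · by_contra hne
    exact parts_surgery_ne (disjoint_tile hne) (le_self_add.trans_lt (hlt a ha)) hab
  · rw [forall_mem_image]
    intro a ha
    obtain ⟨hpart, hless, S, hS, hconn, hagree⟩ :=
      isLocalImprovement_surgery hB hP (hQ a ha) (htrace a ha).connected (hlt a ha)
    exact ⟨hpart, hless, S, hS.trans (Nat.mul_le_mul_right B (hm a ha)), hconn, hagree⟩

end Tiling

theorem IsSeam.exists_isLocalImprovement {V ι : Type*} [Fintype V] [DecidableEq ι]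
    {G : SimpleGraph V} {B m : ℕ} {τ : V → ι} {D : Finset V} (hD : IsSeam G τ D) (hB : 0 < B)
    (htrace : ∀ v, IsTraceable G (tile τ (τ v))) (hm : ∀ a, #(tile τ a) ≤ m)
    {ω : Finset (Finset V)} (hω : IsBoundedConnPartition G B ω) :
    ∃ W : Finset (Finset (Finset V)),
      B * #ω ≤ B * m * #W + Fintype.card V + B * #(univ.image τ) + (B ^ 3 + B) * #D ∧
      ∀ ω' ∈ W, IsLocalImprovement G B (m * B) ω ω' := by
  classical
  obtain ⟨P, rfl, hP⟩ := isBoundedConnPartition_iff_exists_finpartition.1 hω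
  obtain ⟨W, hcard, hW⟩ := exists_isLocalImprovement_of_isWasteful hB hP
    {a ∈ univ.image τ | IsWasteful B P (tile τ a)}
    (fun a ha ↦ by
      obtain ⟨v, -, rfl⟩ := mem_image.1 (mem_filter.1 ha).1
      exact htrace v)
    (fun a _ ↦ hm a) (fun a ha ↦ (mem_filter.1 ha).2)
  exact ⟨W, hcard ▸ hD.card_parts_le_of_isWasteful hP hm, hW⟩

section Grid

section BoxProd

variable {V W ι κ : Type*} [Fintype V] [Fintype W]
  {G : SimpleGraph V} {H : SimpleGraph W} {σ : V → ι} {τ : W → κ} {D : Finset V} {E : Finset W}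

lemma tile_prodMap [DecidableEq ι] [DecidableEq κ] (σ : V → ι) (τ : W → κ) (a : ι × κ) :
    tile (Prod.map σ τ) a = tile σ a.1 ×ˢ tile τ a.2 := by
  ext v
  rw [mem_tile, mem_product, mem_tile, mem_tile, Prod.ext_iff, Prod.map_fst, Prod.map_snd]

variable [DecidableEq V] [DecidableEq W]

/-- The vertices of `V × W` with first coordinate in `D` or second coordinate in `E`. -/
def cross (D : Finset V) (E : Finset W) : Finset (V × W) :=
  D ×ˢ univ ∪ univ ×ˢ E

lemma mem_cross {v : V × W} : v ∈ cross D E ↔ v.1 ∈ D ∨ v.2 ∈ E := by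
  simp only [cross, mem_union, mem_product, mem_univ, and_true, true_and]

lemma IsSeam.boxProd (hD : IsSeam G σ D) (hE : IsSeam H τ E) :
    IsSeam (G □ H) (Prod.map σ τ) (cross D E) := by
  rintro u v huv hu hv
  rw [mem_cross, not_or] at hu hv
  obtain ⟨hadj, heq⟩ | ⟨hadj, heq⟩ := boxProd_adj.1 huv
  · exact Prod.ext (hD _ _ hadj hu.1 hv.1) (congrArg τ heq)
  · exact Prod.ext (congrArg σ heq) (hE _ _ hadj hu.2 hv.2)

lemma card_cross_le : #(cross D E) ≤ #D * Fintype.card W + Fintype.card V * #E := by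
  refine (card_union_le _ _).trans_eq ?_
  rw [card_product, card_product, card_univ, card_univ]

lemma card_image_prodMap_le [DecidableEq ι] [DecidableEq κ] {a : ι} {b : κ}
    (hσ : ∀ v, σ v = a ∨ ∃ d ∈ D, σ d = σ v) (hτ : ∀ w, τ w = b ∨ ∃ e ∈ E, τ e = τ w) :
    #(univ.image (Prod.map σ τ)) ≤ #(cross D E) + 1 := by
  suffices h : univ.image (Prod.map σ τ) ⊆
      insert (a, b) ((cross D E).image (Prod.map σ τ)) from
    (card_le_card h).trans <| (card_insert_le _ _).trans (Nat.add_le_add_right card_image_le 1)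
  rw [image_subset_iff]
  rintro ⟨v, w⟩ -
  rw [mem_insert, mem_image]
  obtain hv | ⟨d, hd, hdv⟩ := hσ v
  · obtain hw | ⟨e, he, hew⟩ := hτ w
    · exact .inl (Prod.ext hv hw)
    · exact .inr ⟨(v, e), mem_cross.2 (.inr he), Prod.ext rfl hew⟩
  · exact .inr ⟨(d, w), mem_cross.2 (.inl hd), Prod.ext hdv rfl⟩

end BoxProd

lemma gridGraph_eq_boxProd (k l : ℕ) : gridGraph k l = pathGraph k □ pathGraph l := by
  ext u v
  simp only [gridGraph, fromRel_adj, boxProd_adj, pathGraph_adj, ne_eq, Prod.ext_iff, Fin.ext_iff]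
  lia

variable {k M : ℕ}

/-- The index of the block containing `i` when `Fin k` is cut into blocks of `M` consecutive
elements (the last one possibly shorter). -/
def blockIndex (M : ℕ) (i : Fin k) : ℕ :=
  i / M

/-- The first elements of all blocks of length `M` of `Fin k` but the initial one. -/
def blockStarts (k M : ℕ) : Finset (Fin k) :=
  {i | (i : ℕ) ≠ 0 ∧ M ∣ i}

lemma card_blockStarts_le (k M : ℕ) : #(blockStarts k M) ≤ k / M := by
  rw [← Nat.card_multiples', ← card_map Fin.valEmbedding]
  refine card_le_card fun j hj ↦ ?_
  obtain ⟨i, hi, rfl⟩ := mem_map.1 hj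
  exact mem_filter.2 ⟨mem_range.2 (i.2.trans k.lt_succ_self), (mem_filter.1 hi).2⟩

lemma mul_card_cross_blockStarts_le (k l M : ℕ) :
    M * #(cross (blockStarts k M) (blockStarts l M)) ≤ 2 * (k * l) := by
  have hk := (Nat.mul_le_mul_left M (card_blockStarts_le k M)).trans (Nat.mul_div_le k M)
  have hl := (Nat.mul_le_mul_left M (card_blockStarts_le l M)).trans (Nat.mul_div_le l M)
  calc M * #(cross (blockStarts k M) (blockStarts l M))
      ≤ M * (#(blockStarts k M) * l + k * #(blockStarts l M)) := by
        simpa only [Fintype.card_fin] using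
          Nat.mul_le_mul_left M (card_cross_le (D := blockStarts k M) (E := blockStarts l M))
    _ = M * #(blockStarts k M) * l + k * (M * #(blockStarts l M)) := by ring
    _ ≤ k * l + k * l := by gcongr
    _ = 2 * (k * l) := (two_mul _).symm

lemma isSeam_blockStarts (k M : ℕ) :
    IsSeam (pathGraph k) (blockIndex M) (blockStarts k M) := by
  have hsucc : ∀ i j : Fin k, (i : ℕ) + 1 = j → j ∉ blockStarts k M →
      blockIndex M i = blockIndex M j := by
    intro i j hij hj
    have hndvd : ¬M ∣ i + 1 := fun h ↦
      hj (mem_filter.2 ⟨mem_univ j, by lia, hij ▸ h⟩)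
    rw [blockIndex, blockIndex, ← hij, Nat.succ_div_of_not_dvd hndvd]
  rintro u v huv hu hv
  obtain huv | huv := pathGraph_adj.1 huv
  · exact hsucc u v huv hv
  · exact (hsucc v u huv hu).symm

lemma blockIndex_eq_zero_or_exists_mem_blockStarts (hM : 0 < M) (i : Fin k) :
    blockIndex M i = 0 ∨ ∃ j ∈ blockStarts k M, blockIndex M j = blockIndex M i := by
  refine or_iff_not_imp_left.2 fun hi ↦ ?_
  refine ⟨⟨M * (i / M), (Nat.mul_div_le i M).trans_lt i.2⟩, ?_, ?_⟩
  · exact mem_filter.2 ⟨mem_univ _, Nat.mul_ne_zero hM.ne' hi, Nat.dvd_mul_right M _⟩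
  · exact Nat.mul_div_cancel_left _ hM

lemma card_tile_blockIndex_le (hM : 0 < M) (a : ℕ) :
    #(tile (blockIndex M : Fin k → ℕ) a) ≤ M := by
  calc #(tile (blockIndex M : Fin k → ℕ) a)
      ≤ #(Ico (M * a) (M * (a + 1))) := by
        rw [← card_map Fin.valEmbedding]
        refine card_le_card fun j hj ↦ ?_
        obtain ⟨i, hi, rfl⟩ := mem_map.1 hj
        obtain rfl : blockIndex M i = a := mem_tile.1 hi
        exact mem_Ico.2 ⟨Nat.mul_div_le i M, Nat.lt_mul_div_succ i hM⟩
    _ = M := by rw [Nat.card_Ico, mul_add_one, Nat.add_sub_cancel_left]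

lemma isTraceable_tile_blockIndex (M : ℕ) (i : Fin k) :
    IsTraceable (pathGraph k) (tile (blockIndex M) (blockIndex M i)) := by
  refine isTraceable_hasse_of_ordConnected ⟨i, mem_tile.2 rfl⟩ ?_
  have hmono : Monotone (blockIndex M : Fin k → ℕ) := fun _ _ h ↦ Nat.div_le_div_right h
  have hset : ((tile (blockIndex M) (blockIndex M i) : Finset (Fin k)) : Set (Fin k)) =
      blockIndex M ⁻¹' {blockIndex M i} := Set.ext fun j ↦ mem_tile
  rw [hset]
  exact Set.ordConnected_singleton.preimage_mono hmono

theorem gridGraph_exists_isLocalImprovement {l B : ℕ} (hM : 0 < M) (hB : 0 < B)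
    {ω : Finset (Finset (Fin k × Fin l))} (hω : IsBoundedConnPartition (gridGraph k l) B ω) :
    ∃ W : Finset (Finset (Finset (Fin k × Fin l))),
      M * (B * #ω) ≤ M * (B * (M * M) * #W + k * l + B) + 2 * (B ^ 3 + 2 * B) * (k * l) ∧
      ∀ ω' ∈ W, IsLocalImprovement (gridGraph k l) B (M * M * B) ω ω' := by
  rw [gridGraph_eq_boxProd] at hω ⊢
  have hseam := (isSeam_blockStarts k M).boxProd (isSeam_blockStarts l M)
  have htrace (v : Fin k × Fin l) : IsTraceable (pathGraph k □ pathGraph l)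
      (tile (Prod.map (blockIndex M) (blockIndex M)) (Prod.map (blockIndex M) (blockIndex M) v)) :=
    tile_prodMap (blockIndex M) (blockIndex M) _ ▸
      (isTraceable_tile_blockIndex M v.1).boxProd (isTraceable_tile_blockIndex M v.2)
  have hcard (a : ℕ × ℕ) :
      #(tile (Prod.map (blockIndex M : Fin k → ℕ) (blockIndex M : Fin l → ℕ)) a) ≤ M * M := by
    rw [tile_prodMap, card_product]
    exact Nat.mul_le_mul (card_tile_blockIndex_le hM a.1) (card_tile_blockIndex_le hM a.2)
  obtain ⟨W, hparts, hW⟩ := hseam.exists_isLocalImprovement hB htrace hcard hω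
  refine ⟨W, ?_, hW⟩
  set D := cross (blockStarts k M) (blockStarts l M)
  have hlabels : #(univ.image (Prod.map (blockIndex M : Fin k → ℕ) (blockIndex M : Fin l → ℕ))) ≤
      #D + 1 :=
    card_image_prodMap_le (blockIndex_eq_zero_or_exists_mem_blockStarts hM)
      (blockIndex_eq_zero_or_exists_mem_blockStarts hM)
  rw [Fintype.card_prod, Fintype.card_fin, Fintype.card_fin] at hparts
  calc M * (B * #ω)
      ≤ M * (B * (M * M) * #W + k * l + B * (#D + 1) + (B ^ 3 + B) * #D) :=
        Nat.mul_le_mul_left M (hparts.trans (by gcongr))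
    _ = M * (B * (M * M) * #W + k * l + B) + (B ^ 3 + 2 * B) * (M * #D) := by ring
    _ ≤ M * (B * (M * M) * #W + k * l + B) + (B ^ 3 + 2 * B) * (2 * (k * l)) :=
        Nat.add_le_add_left (Nat.mul_le_mul_left _ (mul_card_cross_blockStarts_le k l M)) _
    _ = _ := by ring

end Grid

lemma div_mul_le_of_linear_bounds {ε B M n c g : ℝ} (hB : 0 < B) (hM : 0 < M) (hn : 0 ≤ n)
    (hcount : M * (B * c) ≤ M * (B * (M * M) * g + n + B) + 2 * (B ^ 3 + 2 * B) * n)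
    (hc : (1 + ε) * n / B ≤ c) (hMε : 8 * (B ^ 3 + 2 * B) ≤ M * ε) (hnε : 4 * B ≤ n * ε) :
    ε / (2 * B * (M * M)) * n ≤ g := by
  rw [div_le_iff₀ hB] at hc
  have hmul : M * ((1 + ε) * n) ≤ M * (B * (M * M) * g + n + B + ε * n / 4) :=
    calc M * ((1 + ε) * n) ≤ M * (B * c) := by rw [mul_comm B]; gcongr
      _ ≤ M * (B * (M * M) * g + n + B) + 8 * (B ^ 3 + 2 * B) * (n / 4) := by linarith
      _ ≤ M * (B * (M * M) * g + n + B) + M * ε * (n / 4) := by gcongr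
      _ = M * (B * (M * M) * g + n + B + ε * n / 4) := by ring
  have hcancel := le_of_mul_le_mul_left hmul hM
  rw [div_mul_eq_mul_div, div_le_iff₀ (by positivity)]
  linarith

/-- Proposition 3: rectangular grids are `(B,1)`-partitionable.  For every `ε > 0` and
`B`, there are `K`, `δ > 0`, `N` such that any `B`-bounded connected partition of a
grid on `n = kℓ ≥ N` vertices with at least `(1+ε)·n/B` parts admits at least `δ·n`
distinct `B`-bounded connected partitions with strictly fewer parts, each agreeing
with it outside a connected set of at most `K` vertices. -/
theorem grid_partitionable (ε : ℝ) (hε : 0 < ε) (B : ℕ) (hB : 1 ≤ B) :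
    ∃ (K : ℕ) (δ : ℝ), 0 < δ ∧ ∃ N : ℕ,
      ∀ k l : ℕ, N ≤ k * l →
      ∀ ω : Finset (Finset (Fin k × Fin l)),
        IsBoundedConnPartition (gridGraph k l) B ω →
        (1 + ε) * ((k * l : ℕ) : ℝ) / (B : ℝ) ≤ (ω.card : ℝ) →
        ∃ W : Finset (Finset (Finset (Fin k × Fin l))),
          δ * ((k * l : ℕ) : ℝ) ≤ (W.card : ℝ) ∧
          ∀ ω' ∈ W, IsBoundedConnPartition (gridGraph k l) B ω' ∧
            ω'.card < ω.card ∧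
            ∃ S : Finset (Fin k × Fin l), S.card ≤ K ∧
              ((gridGraph k l).induce (S : Set (Fin k × Fin l))).Connected ∧
              AgreeOutside ω ω' S := by
  obtain ⟨M, hM⟩ := exists_nat_ge (8 * ((B : ℝ) ^ 3 + 2 * B) / ε)
  obtain ⟨N, hN⟩ := exists_nat_ge (4 * (B : ℝ) / ε)
  have hB' : (0 : ℝ) < B := Nat.cast_pos.2 hB
  have hM' : (0 : ℝ) < M := lt_of_lt_of_le (by positivity) hM
  refine ⟨M * M * B, ε / (2 * B * (M * M)), by positivity, N, fun k l hkl ω hω hcard ↦ ?_⟩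
  obtain ⟨W, hcount, hW⟩ := gridGraph_exists_isLocalImprovement (Nat.cast_pos.1 hM') hB hω
  refine ⟨W, ?_, hW⟩
  have hn : 4 * (B : ℝ) / ε ≤ (k * l : ℕ) := hN.trans (Nat.cast_le.2 hkl)
  rw [div_le_iff₀ hε] at hM hn
  exact div_mul_le_of_linear_bounds hB' hM' (Nat.cast_nonneg _) (mod_cast hcount) hcard hM hn
end

section
/- Let k, ℓ ≥ 3 be integers and let G be the k×ℓ grid graph. Let D be the set of boundary vertices of G, i.e., vertices (i,j) with i ∈ {0, k−1} or j ∈ {0, ℓ−1}; the set D induces a cycle in G. Suppose A ⊆ V(G) is such that both A and V(G)∖A induce connected (possibly empty) subgraphs of G. Then A ∩ D is either empty, or equal to all of D, or consists of consecutive vertices along the boundary cycle (i.e., induces a path in the cycle induced by D). -/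
/-- The boundary vertices of the `k × ℓ` grid: those `(i,j)` with `i ∈ {0, k-1}` or
`j ∈ {0, ℓ-1}`.  For `k, ℓ ≥ 3` they induce a cycle in the grid. -/
def gridBoundary (k l : ℕ) : Set (Fin k × Fin l) :=
  {v | v.1.val = 0 ∨ v.1.val = k - 1 ∨ v.2.val = 0 ∨ v.2.val = l - 1}

/-!
View `A` and `Aᶜ` as two colour classes. Take the monochromatic grid edges and discard the top edge
of every monochromatic unit square: going down, along the bottom and up again shows, row by row,
that this does not change connectivity. What remains has at most two components, hence at least
`|V| - 2` edges. Counting the remaining edges square by square turns this into the statement that at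
most two edges of the boundary cycle are bichromatic, and a cyclic sequence of two colours with at
most two changes has connected colour classes.
-/

open Finset

theorem sum_range_shift_add_zero {M : Type*} [AddCommMonoid M] (f : ℕ → M) (n : ℕ) :
    ∑ i ∈ range n, f (i + 1) + f 0 = ∑ i ∈ range n, f i + f n := by
  rw [← sum_range_succ', sum_range_succ]

section ColourChanges

variable {V : Type*}

open Classical in
/-- The indicator of the edge cut of `A`: it is `1` if exactly one of `u` and `v` lies in `A`. -/
noncomputable def cutIndicator (A : Set V) (u v : V) : ℕ :=
  if u ∈ A ↔ v ∈ A then 0 else 1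

theorem cutIndicator_comm (A : Set V) (u v : V) : cutIndicator A u v = cutIndicator A v u := by
  unfold cutIndicator
  grind

theorem cutIndicator_triangle (A : Set V) (u v w : V) :
    cutIndicator A u w ≤ cutIndicator A u v + cutIndicator A v w := by
  unfold cutIndicator
  grind

theorem cutIndicator_of_mem_of_notMem {A : Set V} {u v : V} (hu : u ∈ A) (hv : v ∉ A) :
    cutIndicator A u v = 1 := by
  simp [cutIndicator, hu, hv]

open Classical in
theorem card_filter_add_sum_cutIndicator {ι : Type*} (A : Set V) (I : Finset ι) (f g : ι → V) :
    #{i ∈ I | f i ∈ A ↔ g i ∈ A} + ∑ i ∈ I, cutIndicator A (f i) (g i) = #I := by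
  rw [card_filter, ← sum_add_distrib, card_eq_sum_ones]
  refine sum_congr rfl fun i _ => ?_
  unfold cutIndicator
  split_ifs <;> rfl

theorem cutIndicator_le_sum_Ico (A : Set V) (x : ℕ → V) {a b : ℕ} (hab : a ≤ b) :
    cutIndicator A (x a) (x b) ≤ ∑ i ∈ Ico a b, cutIndicator A (x i) (x (i + 1)) := by
  induction b, hab using Nat.le_induction with
  | base => simp [cutIndicator]
  | succ b hab ih =>
    rw [sum_Ico_succ_top hab]
    exact (cutIndicator_triangle A _ (x b) _).trans (by gcongr)

theorem sum_cutIndicator_reflect (A : Set V) (x : ℕ → V) (m : ℕ) :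
    ∑ i ∈ range m, cutIndicator A (x (m - i)) (x (m - (i + 1))) =
      ∑ i ∈ range m, cutIndicator A (x i) (x (i + 1)) := by
  rw [← sum_range_reflect]
  refine sum_congr rfl fun i hi => ?_
  have hi : i < m := mem_range.mp hi
  rw [cutIndicator_comm, show m - (m - 1 - i) = i + 1 by omega,
    show m - (m - 1 - i + 1) = i by omega]

theorem sum_cutIndicator_alternating_le (A : Set V) (x : ℕ → V) {a b c d N : ℕ}
    (hab : a ≤ b) (hbc : b ≤ c) (hcd : c ≤ d) (hdN : d ≤ N) :
    cutIndicator A (x a) (x b) + cutIndicator A (x b) (x c) + cutIndicator A (x c) (x d) ≤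
      ∑ i ∈ range N, cutIndicator A (x i) (x (i + 1)) :=
  calc
    _ ≤ ∑ i ∈ Ico a d, cutIndicator A (x i) (x (i + 1)) := by
      rw [← sum_Ico_consecutive _ (hab.trans hbc) hcd, ← sum_Ico_consecutive _ hab hbc]
      gcongr <;> exact cutIndicator_le_sum_Ico A x ‹_›
    _ ≤ _ := sum_le_sum_of_subset fun i hi => by
      have := mem_Ico.mp hi
      exact mem_range.mpr (by omega)

theorem forall_mem_inside_or_outside_of_sum_cutIndicator_le_two {A : Set V} {x : ℕ → V} {N : ℕ}
    (hcut : ∑ i ∈ range N, cutIndicator A (x i) (x (i + 1)) ≤ 2) {s t : ℕ}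
    (htN : t ≤ N) (hs : x s ∈ A) (ht : x t ∈ A) :
    (∀ i, s ≤ i → i ≤ t → x i ∈ A) ∨ ∀ i ≤ N, i ≤ s ∨ t ≤ i → x i ∈ A := by
  by_contra! ⟨⟨u, hsu, hut, hu⟩, w, hwN, hw, hwA⟩
  have hsu' := cutIndicator_of_mem_of_notMem hs hu
  have htu' := cutIndicator_of_mem_of_notMem ht hu
  rcases hw with hws | htw
  · have := sum_cutIndicator_alternating_le A x hws hsu hut htN
    have := cutIndicator_of_mem_of_notMem hs hwA
    have := cutIndicator_comm A (x w) (x s)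
    have := cutIndicator_comm A (x u) (x t)
    omega
  · have := sum_cutIndicator_alternating_le A x hsu hut htw hwN
    have := cutIndicator_of_mem_of_notMem ht hwA
    have := cutIndicator_comm A (x u) (x t)
    omega

end ColourChanges

section Graphs

variable {V : Type*}

theorem reachable_induce_of_forall_adj_succ {G : SimpleGraph V} {S : Set V} {x : ℕ → V} {s t : ℕ}
    (hst : s ≤ t) (hadj : ∀ i < t, G.Adj (x i) (x (i + 1))) (hS : ∀ i, s ≤ i → i ≤ t → x i ∈ S) :
    (G.induce S).Reachable ⟨x s, hS s le_rfl hst⟩ ⟨x t, hS t hst le_rfl⟩ := by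
  induction t, hst using Nat.le_induction with
  | base => exact .refl _
  | succ t hst ih =>
    have hlast : (G.induce S).Adj ⟨x t, hS t hst t.le_succ⟩
        ⟨x (t + 1), hS (t + 1) (by omega) le_rfl⟩ := hadj t t.lt_succ_self
    exact (ih (fun i hi => hadj i (by omega)) fun i hsi hit => hS i hsi (by omega)).trans
      hlast.reachable

theorem preconnected_induce_inter_of_sum_cutIndicator_le_two {G : SimpleGraph V} {A : Set V}
    {x : ℕ → V} {N : ℕ} (hclosed : x N = x 0) (hadj : ∀ i < N, G.Adj (x i) (x (i + 1)))
    (hcut : ∑ i ∈ range N, cutIndicator A (x i) (x (i + 1)) ≤ 2) :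
    (G.induce (A ∩ x '' Set.Iic N)).Preconnected := by
  have hmem : ∀ i ≤ N, x i ∈ x '' Set.Iic N := fun i hi => Set.mem_image_of_mem x hi
  have reachable_of_le : ∀ s t (hs : x s ∈ A ∩ x '' Set.Iic N) (ht : x t ∈ A ∩ x '' Set.Iic N),
      s ≤ t → t ≤ N → (G.induce (A ∩ x '' Set.Iic N)).Reachable ⟨x s, hs⟩ ⟨x t, ht⟩ := by
    intro s t hs ht hst htN
    rcases forall_mem_inside_or_outside_of_sum_cutIndicator_le_two hcut htN hs.1 ht.1
      with inside | outside
    · have hinside : ∀ i, s ≤ i → i ≤ t → x i ∈ A ∩ x '' Set.Iic N := fun i hsi hit =>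
        ⟨inside i hsi hit, hmem i (hit.trans htN)⟩
      exact reachable_induce_of_forall_adj_succ hst (fun i hi => hadj i (by omega)) hinside
    · have hbefore : ∀ i, 0 ≤ i → i ≤ s → x i ∈ A ∩ x '' Set.Iic N := fun i _ his =>
        ⟨outside i (by omega) (.inl his), hmem i (by omega)⟩
      have hafter : ∀ i, t ≤ i → i ≤ N → x i ∈ A ∩ x '' Set.Iic N := fun i hti hiN =>
        ⟨outside i hiN (.inr hti), hmem i hiN⟩
      have before := reachable_induce_of_forall_adj_succ s.zero_le
        (fun i hi => hadj i (by omega)) hbefore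
      have after := reachable_induce_of_forall_adj_succ htN hadj hafter
      simp only [hclosed] at after
      exact (after.trans before).symm
  rintro ⟨_, hs⟩ ⟨_, ht⟩
  obtain ⟨s, hsN, rfl⟩ := hs.2
  obtain ⟨t, htN, rfl⟩ := ht.2
  rcases le_total s t with hst | hts
  · exact reachable_of_le s t hs ht hst htN
  · exact (reachable_of_le t s ht hs hts hsN).symm

theorem reachable_of_preconnected_induce {G H : SimpleGraph V} {S : Set V}
    (hS : (G.induce S).Preconnected)
    (hadj : ∀ u ∈ S, ∀ v ∈ S, G.Adj u v → H.Reachable u v) {u v : V} (hu : u ∈ S) (hv : v ∈ S) :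
    H.Reachable u v := by
  have h := (SimpleGraph.reachable_iff_reflTransGen _ _).mp (hS ⟨u, hu⟩ ⟨v, hv⟩)
  refine (SimpleGraph.reachable_iff_reflTransGen _ _).mpr (h.lift' Subtype.val fun a b hab => ?_)
  exact (SimpleGraph.reachable_iff_reflTransGen _ _).mp (hadj a a.2 b b.2 hab)

theorem card_le_card_add_one_of_connected_fromEdgeSet [Finite V] {E : Finset (Sym2 V)}
    (hE : (SimpleGraph.fromEdgeSet (E : Set (Sym2 V))).Connected) : Nat.card V ≤ #E + 1 := by
  refine hE.card_vert_le_card_edgeSet_add_one.trans ?_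
  rw [SimpleGraph.edgeSet_fromEdgeSet, Nat.card_coe_set_eq, ← Set.ncard_coe_finset]
  gcongr
  · exact E.finite_toSet
  · exact Set.sdiff_subset

open Classical in
theorem card_le_card_add_two_of_reachable [Finite V] {E : Finset (Sym2 V)} {a b : V}
    (hE : ∀ v, (SimpleGraph.fromEdgeSet (E : Set (Sym2 V))).Reachable a v ∨
      (SimpleGraph.fromEdgeSet (E : Set (Sym2 V))).Reachable b v) : Nat.card V ≤ #E + 2 := by
  have hle : SimpleGraph.fromEdgeSet (E : Set (Sym2 V)) ≤
      SimpleGraph.fromEdgeSet (insert s(a, b) E : Finset (Sym2 V)) :=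
    SimpleGraph.fromEdgeSet_mono (by simp)
  have hab : (SimpleGraph.fromEdgeSet (insert s(a, b) E : Finset (Sym2 V))).Reachable a b := by
    rcases eq_or_ne a b with rfl | hne
    · exact .refl _
    · exact SimpleGraph.Adj.reachable ((SimpleGraph.fromEdgeSet_adj _).mpr ⟨by simp, hne⟩)
  have hconn : (SimpleGraph.fromEdgeSet (insert s(a, b) E : Finset (Sym2 V))).Connected :=
    (SimpleGraph.connected_iff_exists_forall_reachable _).mpr
      ⟨a, fun v => (hE v).elim (.mono hle) fun h => hab.trans (h.mono hle)⟩
  have := card_le_card_add_one_of_connected_fromEdgeSet hconn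
  have := card_insert_le s(a, b) E
  omega

theorem card_le_card_add_two_of_reachable_of_mem_iff [Finite V] {E : Finset (Sym2 V)} (A : Set V)
    (hE : ∀ u v, (u ∈ A ↔ v ∈ A) → (SimpleGraph.fromEdgeSet (E : Set (Sym2 V))).Reachable u v) :
    Nat.card V ≤ #E + 2 := by
  cases isEmpty_or_nonempty V
  · simp
  by_cases hA : ∃ a b, a ∈ A ∧ b ∉ A
  · obtain ⟨a, b, ha, hb⟩ := hA
    refine card_le_card_add_two_of_reachable (a := a) (b := b) fun v => ?_
    by_cases hv : v ∈ A
    · exact .inl (hE a v (by tauto))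
    · exact .inr (hE b v (by tauto))
  · push Not at hA
    have v₀ := Classical.arbitrary V
    exact card_le_card_add_two_of_reachable (a := v₀) (b := v₀) fun v =>
      .inl (hE v₀ v ⟨hA v₀ v, hA v v₀⟩)

end Graphs

section Grid

variable {m n : ℕ} {A : Set (Fin (m + 1) × Fin (n + 1))}

/-- The vertex `(i, j)` of the `(m + 1) × (n + 1)` grid. Coordinates range over all of `ℕ`, and are
reduced modulo `m + 1` and `n + 1`; only `i ≤ m` and `j ≤ n` are meaningful. -/
def gridVertex (m n i j : ℕ) : Fin (m + 1) × Fin (n + 1) :=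
  (Fin.ofNat (m + 1) i, Fin.ofNat (n + 1) j)

theorem gridVertex_val (v : Fin (m + 1) × Fin (n + 1)) : gridVertex m n v.1 v.2 = v := by
  simp [gridVertex]

theorem gridVertex_fst_val {i : ℕ} (hi : i ≤ m) (j : ℕ) : (gridVertex m n i j).1.val = i :=
  Nat.mod_eq_of_lt (by omega)

theorem gridVertex_snd_val (i : ℕ) {j : ℕ} (hj : j ≤ n) : (gridVertex m n i j).2.val = j :=
  Nat.mod_eq_of_lt (by omega)

theorem gridGraph_adj_iff {k l : ℕ} {u v : Fin k × Fin l} :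
    (gridGraph k l).Adj u v ↔
      (u.1.val = v.1.val ∧ (u.2.val + 1 = v.2.val ∨ v.2.val + 1 = u.2.val)) ∨
      (u.2.val = v.2.val ∧ (u.1.val + 1 = v.1.val ∨ v.1.val + 1 = u.1.val)) := by
  simp only [gridGraph, SimpleGraph.fromRel_adj, ne_eq, Prod.ext_iff, Fin.ext_iff]
  omega

theorem gridGraph_adj_gridVertex_iff {i j i' j' : ℕ} (hi : i ≤ m) (hj : j ≤ n) (hi' : i' ≤ m)
    (hj' : j' ≤ n) :
    (gridGraph (m + 1) (n + 1)).Adj (gridVertex m n i j) (gridVertex m n i' j') ↔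
      (i = i' ∧ (j + 1 = j' ∨ j' + 1 = j)) ∨ (j = j' ∧ (i + 1 = i' ∨ i' + 1 = i)) := by
  rw [gridGraph_adj_iff, gridVertex_fst_val hi, gridVertex_fst_val hi', gridVertex_snd_val _ hj,
    gridVertex_snd_val _ hj']

/-- The top edge of the unit square with lower left corner `(i, j)` is monochromatic for the
partition into `A` and `Aᶜ`, but the square is not. -/
def TopEdgeExposed (A : Set (Fin (m + 1) × Fin (n + 1))) (i j : ℕ) : Prop :=
  (gridVertex m n i (j + 1) ∈ A ↔ gridVertex m n (i + 1) (j + 1) ∈ A) ∧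
    ¬((gridVertex m n i j ∈ A ↔ gridVertex m n (i + 1) j ∈ A) ∧
      (gridVertex m n i j ∈ A ↔ gridVertex m n i (j + 1) ∈ A))

open Classical in
/-- The edges of the grid that are monochromatic for the partition into `A` and `Aᶜ`, without the
top edges of the monochromatic unit squares: vertical edges, edges of the bottom row, and top edges
of unit squares, in this order. -/
noncomputable def prunedEdges (A : Set (Fin (m + 1) × Fin (n + 1))) :
    Finset (Sym2 (Fin (m + 1) × Fin (n + 1))) :=
  {p ∈ range (m + 1) ×ˢ range n |
      gridVertex m n p.1 p.2 ∈ A ↔ gridVertex m n p.1 (p.2 + 1) ∈ A}.image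
    (fun p => s(gridVertex m n p.1 p.2, gridVertex m n p.1 (p.2 + 1))) ∪
  {i ∈ range m | gridVertex m n i 0 ∈ A ↔ gridVertex m n (i + 1) 0 ∈ A}.image
    (fun i => s(gridVertex m n i 0, gridVertex m n (i + 1) 0)) ∪
  {p ∈ range m ×ˢ range n | TopEdgeExposed A p.1 p.2}.image
    (fun p => s(gridVertex m n p.1 (p.2 + 1), gridVertex m n (p.1 + 1) (p.2 + 1)))

/-- The spanning subgraph of the grid with edge set `prunedEdges A`. -/
noncomputable def prunedGraph (A : Set (Fin (m + 1) × Fin (n + 1))) :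
    SimpleGraph (Fin (m + 1) × Fin (n + 1)) :=
  SimpleGraph.fromEdgeSet (prunedEdges A : Set (Sym2 (Fin (m + 1) × Fin (n + 1))))

theorem prunedGraph_adj_vertical {i j : ℕ} (hi : i ≤ m) (hj : j < n)
    (hA : gridVertex m n i j ∈ A ↔ gridVertex m n i (j + 1) ∈ A) :
    (prunedGraph A).Adj (gridVertex m n i j) (gridVertex m n i (j + 1)) := by
  refine (SimpleGraph.fromEdgeSet_adj _).mpr ⟨?_, ?_⟩
  · refine mem_coe.mpr (mem_union_left _ (mem_union_left _ (mem_image.mpr ⟨(i, j), ?_, rfl⟩)))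
    simpa [Nat.lt_succ_iff, hi, hj] using hA
  · exact ((gridGraph_adj_gridVertex_iff hi hj.le hi hj).mpr (by omega)).ne

theorem prunedGraph_adj_bottom {i : ℕ} (hi : i < m)
    (hA : gridVertex m n i 0 ∈ A ↔ gridVertex m n (i + 1) 0 ∈ A) :
    (prunedGraph A).Adj (gridVertex m n i 0) (gridVertex m n (i + 1) 0) := by
  refine (SimpleGraph.fromEdgeSet_adj _).mpr ⟨?_, ?_⟩
  · refine mem_coe.mpr (mem_union_left _ (mem_union_right _ (mem_image.mpr ⟨i, ?_, rfl⟩)))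
    simpa [hi] using hA
  · exact ((gridGraph_adj_gridVertex_iff hi.le n.zero_le hi n.zero_le).mpr (by omega)).ne

theorem prunedGraph_adj_of_topEdgeExposed {i j : ℕ} (hi : i < m) (hj : j < n)
    (hA : TopEdgeExposed A i j) :
    (prunedGraph A).Adj (gridVertex m n i (j + 1)) (gridVertex m n (i + 1) (j + 1)) := by
  refine (SimpleGraph.fromEdgeSet_adj _).mpr ⟨?_, ?_⟩
  · refine mem_coe.mpr (mem_union_right _ (mem_image.mpr ⟨(i, j), ?_, rfl⟩))
    simpa [hi, hj] using hA
  · exact ((gridGraph_adj_gridVertex_iff hi.le hj hi hj).mpr (by omega)).ne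

theorem prunedGraph_reachable_horizontal {i j : ℕ} (hi : i < m) (hj : j ≤ n)
    (hA : gridVertex m n i j ∈ A ↔ gridVertex m n (i + 1) j ∈ A) :
    (prunedGraph A).Reachable (gridVertex m n i j) (gridVertex m n (i + 1) j) := by
  induction j with
  | zero => exact (prunedGraph_adj_bottom hi hA).reachable
  | succ j ih =>
    by_cases hexposed : TopEdgeExposed A i j
    · exact (prunedGraph_adj_of_topEdgeExposed hi hj hexposed).reachable
    · obtain ⟨hbottom, hleft⟩ : (gridVertex m n i j ∈ A ↔ gridVertex m n (i + 1) j ∈ A) ∧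
          (gridVertex m n i j ∈ A ↔ gridVertex m n i (j + 1) ∈ A) := by
        unfold TopEdgeExposed at hexposed
        tauto
      have hright : gridVertex m n (i + 1) j ∈ A ↔ gridVertex m n (i + 1) (j + 1) ∈ A :=
        hbottom.symm.trans (hleft.trans hA)
      exact (prunedGraph_adj_vertical hi.le hj hleft).symm.reachable.trans
        ((ih (by omega) hbottom).trans (prunedGraph_adj_vertical hi hj hright).reachable)

theorem prunedGraph_reachable_of_adj {u v : Fin (m + 1) × Fin (n + 1)}
    (hadj : (gridGraph (m + 1) (n + 1)).Adj u v) (hA : u ∈ A ↔ v ∈ A) :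
    (prunedGraph A).Reachable u v := by
  rw [← gridVertex_val u, ← gridVertex_val v] at hA ⊢
  rcases gridGraph_adj_iff.mp hadj with ⟨hfst, hup | hdown⟩ | ⟨hsnd, hright | hleft⟩
  · rw [hfst, ← hup] at hA ⊢
    exact (prunedGraph_adj_vertical (by omega) (by omega) hA).reachable
  · rw [hfst, ← hdown] at hA ⊢
    exact (prunedGraph_adj_vertical (by omega) (by omega) hA.symm).reachable.symm
  · rw [hsnd, ← hright] at hA ⊢
    exact prunedGraph_reachable_horizontal (by omega) (by omega) hA
  · rw [hsnd, ← hleft] at hA ⊢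
    exact (prunedGraph_reachable_horizontal (by omega) (by omega) hA.symm).symm

theorem prunedGraph_reachable_of_mem_iff
    (hA : ((gridGraph (m + 1) (n + 1)).induce A).Preconnected)
    (hAc : ((gridGraph (m + 1) (n + 1)).induce Aᶜ).Preconnected)
    (u v : Fin (m + 1) × Fin (n + 1)) (huv : u ∈ A ↔ v ∈ A) : (prunedGraph A).Reachable u v := by
  by_cases hu : u ∈ A
  · exact reachable_of_preconnected_induce hA
      (fun a ha b hb hab => prunedGraph_reachable_of_adj hab (iff_of_true ha hb)) hu (huv.mp hu)
  · exact reachable_of_preconnected_induce hAc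
      (fun a ha b hb hab => prunedGraph_reachable_of_adj hab (iff_of_false ha hb)) hu
      (mt huv.mpr hu)

open Classical in
theorem card_prunedEdges_add_le (A : Set (Fin (m + 1) × Fin (n + 1))) :
    #(prunedEdges A) +
        ∑ i ∈ range (m + 1), ∑ j ∈ range n,
          cutIndicator A (gridVertex m n i j) (gridVertex m n i (j + 1)) +
        ∑ i ∈ range m, cutIndicator A (gridVertex m n i 0) (gridVertex m n (i + 1) 0) ≤
      (m + 1) * n + m +
        ∑ i ∈ range m, ∑ j ∈ range n, if TopEdgeExposed A i j then 1 else 0 := by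
  have hvertical := card_filter_add_sum_cutIndicator A (range (m + 1) ×ˢ range n)
    (fun p => gridVertex m n p.1 p.2) fun p => gridVertex m n p.1 (p.2 + 1)
  have hbottom := card_filter_add_sum_cutIndicator A (range m)
    (fun i => gridVertex m n i 0) fun i => gridVertex m n (i + 1) 0
  have hexposed := card_filter (fun p : ℕ × ℕ => TopEdgeExposed A p.1 p.2) (range m ×ˢ range n)
  simp only [sum_product, card_product, card_range] at hvertical hbottom hexposed
  have hcard : #(prunedEdges A) ≤ _ := (card_union_le _ _).trans
    (add_le_add ((card_union_le _ _).trans (add_le_add card_image_le card_image_le)) card_image_le)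
  omega

-- Summed over all squares, the horizontal terms telescope and every vertical edge off the left and
-- right sides is counted twice.
open Classical in
theorem two_mul_topEdgeExposed_add_le (A : Set (Fin (m + 1) × Fin (n + 1))) (i j : ℕ) :
    2 * (if TopEdgeExposed A i j then 1 else 0) +
        cutIndicator A (gridVertex m n i (j + 1)) (gridVertex m n (i + 1) (j + 1)) ≤
      cutIndicator A (gridVertex m n i j) (gridVertex m n i (j + 1)) +
        cutIndicator A (gridVertex m n (i + 1) j) (gridVertex m n (i + 1) (j + 1)) +
        cutIndicator A (gridVertex m n i j) (gridVertex m n (i + 1) j) := by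
  unfold cutIndicator TopEdgeExposed
  grind

open Classical in
theorem two_mul_sum_topEdgeExposed_add_le (A : Set (Fin (m + 1) × Fin (n + 1))) :
    2 * (∑ i ∈ range m, ∑ j ∈ range n, if TopEdgeExposed A i j then 1 else 0) +
        ∑ i ∈ range m, cutIndicator A (gridVertex m n i n) (gridVertex m n (i + 1) n) +
        ∑ j ∈ range n, cutIndicator A (gridVertex m n 0 j) (gridVertex m n 0 (j + 1)) +
        ∑ j ∈ range n, cutIndicator A (gridVertex m n m j) (gridVertex m n m (j + 1)) ≤
      2 * ∑ i ∈ range (m + 1), ∑ j ∈ range n,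
          cutIndicator A (gridVertex m n i j) (gridVertex m n i (j + 1)) +
        ∑ i ∈ range m, cutIndicator A (gridVertex m n i 0) (gridVertex m n (i + 1) 0) := by
  have hsquares := sum_le_sum fun i (_ : i ∈ range m) =>
    sum_le_sum fun j (_ : j ∈ range n) => two_mul_topEdgeExposed_add_le A i j
  have hrows := sum_congr rfl fun i (_ : i ∈ range m) => sum_range_shift_add_zero
    (fun j => cutIndicator A (gridVertex m n i j) (gridVertex m n (i + 1) j)) n
  have hcolumns := sum_range_shift_add_zero (fun i => ∑ j ∈ range n,
    cutIndicator A (gridVertex m n i j) (gridVertex m n i (j + 1))) m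
  simp only [sum_add_distrib, ← mul_sum] at hsquares hrows
  rw [sum_range_succ]
  omega

theorem sum_cutIndicator_sides_le_two
    (hA : ((gridGraph (m + 1) (n + 1)).induce A).Preconnected)
    (hAc : ((gridGraph (m + 1) (n + 1)).induce Aᶜ).Preconnected) :
    ∑ i ∈ range m, cutIndicator A (gridVertex m n i 0) (gridVertex m n (i + 1) 0) +
      ∑ j ∈ range n, cutIndicator A (gridVertex m n m j) (gridVertex m n m (j + 1)) +
      ∑ i ∈ range m, cutIndicator A (gridVertex m n i n) (gridVertex m n (i + 1) n) +
      ∑ j ∈ range n, cutIndicator A (gridVertex m n 0 j) (gridVertex m n 0 (j + 1)) ≤ 2 := by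
  have hspanning := card_le_card_add_two_of_reachable_of_mem_iff A
    (prunedGraph_reachable_of_mem_iff hA hAc)
  have hedges := card_prunedEdges_add_le A
  have hsquares := two_mul_sum_topEdgeExposed_add_le A
  have hcard : Nat.card (Fin (m + 1) × Fin (n + 1)) = (m + 1) * n + m + 1 := by
    rw [Nat.card_prod, Nat.card_fin, Nat.card_fin]
    ring
  omega

/-- The counterclockwise closed tour of the boundary of the `(m + 1) × (n + 1)` grid from the corner
`(0, 0)`: at time `t ≤ 2 * (m + n)` it has walked `t` steps. The truncated subtractions switch on
the return along the top side at time `m + n` and along the left side at time `m + n + m`. -/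
def boundaryTour (m n t : ℕ) : Fin (m + 1) × Fin (n + 1) :=
  gridVertex m n (min t m - (t - (m + n))) (min (t - m) n - (t - (m + n + m)))

theorem boundaryTour_bottom {i : ℕ} (hi : i ≤ m) : boundaryTour m n i = gridVertex m n i 0 := by
  unfold boundaryTour
  congr <;> omega

theorem boundaryTour_right {j : ℕ} (hj : j ≤ n) :
    boundaryTour m n (m + j) = gridVertex m n m j := by
  unfold boundaryTour
  congr <;> omega

theorem boundaryTour_top {i : ℕ} (hi : i ≤ m) :
    boundaryTour m n (m + n + i) = gridVertex m n (m - i) n := by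
  unfold boundaryTour
  congr <;> omega

theorem boundaryTour_left {j : ℕ} (hj : j ≤ n) :
    boundaryTour m n (m + n + m + j) = gridVertex m n 0 (n - j) := by
  unfold boundaryTour
  congr <;> omega

theorem boundaryTour_closed : boundaryTour m n (m + n + m + n) = boundaryTour m n 0 := by
  rw [boundaryTour_left le_rfl, boundaryTour_bottom m.zero_le, Nat.sub_self]

theorem boundaryTour_adj_succ {t : ℕ} (ht : t < m + n + m + n) :
    (gridGraph (m + 1) (n + 1)).Adj (boundaryTour m n t) (boundaryTour m n (t + 1)) := by
  unfold boundaryTour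
  rw [gridGraph_adj_gridVertex_iff] <;> omega

theorem gridVertex_mem_gridBoundary_iff {i j : ℕ} (hi : i ≤ m) (hj : j ≤ n) :
    gridVertex m n i j ∈ gridBoundary (m + 1) (n + 1) ↔ i = 0 ∨ i = m ∨ j = 0 ∨ j = n := by
  simp only [gridBoundary, Set.mem_ofPred_eq, gridVertex_fst_val hi, gridVertex_snd_val _ hj,
    Nat.add_sub_cancel]

theorem boundaryTour_image_Iic :
    boundaryTour m n '' Set.Iic (m + n + m + n) = gridBoundary (m + 1) (n + 1) := by
  refine Set.Subset.antisymm ?_ fun v hv => ?_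
  · rintro _ ⟨t, ht, rfl⟩
    have ht : t ≤ m + n + m + n := ht
    exact (gridVertex_mem_gridBoundary_iff (by omega) (by omega)).mpr (by omega)
  · have hi : v.1.val ≤ m := Nat.le_of_lt_succ v.1.isLt
    have hj : v.2.val ≤ n := Nat.le_of_lt_succ v.2.isLt
    rw [← gridVertex_val v, gridVertex_mem_gridBoundary_iff hi hj] at hv
    rw [← gridVertex_val v]
    rcases hv with h | h | h | h
    · exact ⟨m + n + m + (n - v.2), Set.mem_Iic.mpr (by omega), by
        rw [boundaryTour_left (by omega), h, Nat.sub_sub_self hj]⟩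
    · exact ⟨m + v.2, Set.mem_Iic.mpr (by omega), by rw [boundaryTour_right hj, h]⟩
    · exact ⟨v.1, Set.mem_Iic.mpr (by omega), by rw [boundaryTour_bottom hi, h]⟩
    · exact ⟨m + n + (m - v.1), Set.mem_Iic.mpr (by omega), by
        rw [boundaryTour_top (by omega), h, Nat.sub_sub_self hi]⟩

theorem sum_cutIndicator_boundaryTour (A : Set (Fin (m + 1) × Fin (n + 1))) :
    ∑ t ∈ range (m + n + m + n), cutIndicator A (boundaryTour m n t) (boundaryTour m n (t + 1)) =
      ∑ i ∈ range m, cutIndicator A (gridVertex m n i 0) (gridVertex m n (i + 1) 0) +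
      ∑ j ∈ range n, cutIndicator A (gridVertex m n m j) (gridVertex m n m (j + 1)) +
      ∑ i ∈ range m, cutIndicator A (gridVertex m n i n) (gridVertex m n (i + 1) n) +
      ∑ j ∈ range n, cutIndicator A (gridVertex m n 0 j) (gridVertex m n 0 (j + 1)) := by
  rw [sum_range_add, sum_range_add, sum_range_add,
    ← sum_cutIndicator_reflect A (fun i => gridVertex m n i n) m,
    ← sum_cutIndicator_reflect A (fun j => gridVertex m n 0 j) n]
  congr 1
  · congr 1
    · congr 1
      · refine sum_congr rfl fun i hi => ?_
        have hi : i < m := mem_range.mp hi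
        rw [boundaryTour_bottom hi.le, boundaryTour_bottom hi]
      · refine sum_congr rfl fun j hj => ?_
        have hj : j < n := mem_range.mp hj
        rw [boundaryTour_right hj.le, add_assoc, boundaryTour_right hj]
    · refine sum_congr rfl fun i hi => ?_
      have hi : i < m := mem_range.mp hi
      rw [boundaryTour_top hi.le, add_assoc _ i, boundaryTour_top hi]
  · refine sum_congr rfl fun j hj => ?_
    have hj : j < n := mem_range.mp hj
    rw [boundaryTour_left hj.le, add_assoc _ j, boundaryTour_left hj]

theorem preconnected_induce_inter_gridBoundary
    (hA : ((gridGraph (m + 1) (n + 1)).induce A).Preconnected)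
    (hAc : ((gridGraph (m + 1) (n + 1)).induce Aᶜ).Preconnected) :
    ((gridGraph (m + 1) (n + 1)).induce (A ∩ gridBoundary (m + 1) (n + 1))).Preconnected := by
  rw [← boundaryTour_image_Iic]
  refine preconnected_induce_inter_of_sum_cutIndicator_le_two boundaryTour_closed
    (fun _ => boundaryTour_adj_succ) ?_
  rw [sum_cutIndicator_boundaryTour]
  exact sum_cutIndicator_sides_le_two hA hAc

end Grid

/-- If both `A` and its complement induce connected (possibly empty) subgraphs of the
`k × ℓ` grid (`k, ℓ ≥ 3`), then the intersection of `A` with the boundary cycle is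
empty, all of the boundary, or a set of consecutive vertices along the boundary cycle
(equivalently, it induces a connected subgraph, i.e. a path, of that cycle). -/
theorem boundary_trace_is_arc (k l : ℕ) (hk : 3 ≤ k) (hl : 3 ≤ l)
    (A : Set (Fin k × Fin l))
    (hA : ((gridGraph k l).induce A).Preconnected)
    (hAc : ((gridGraph k l).induce Aᶜ).Preconnected) :
    A ∩ gridBoundary k l = ∅ ∨
    A ∩ gridBoundary k l = gridBoundary k l ∨
    (A ∩ gridBoundary k l ≠ gridBoundary k l ∧
      ((gridGraph k l).induce (A ∩ gridBoundary k l)).Connected) := by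
  obtain ⟨m, rfl⟩ : ∃ m, k = m + 1 := ⟨k - 1, by omega⟩
  obtain ⟨n, rfl⟩ : ∃ n, l = n + 1 := ⟨l - 1, by omega⟩
  rcases (A ∩ gridBoundary (m + 1) (n + 1)).eq_empty_or_nonempty with hempty | hnonempty
  · exact .inl hempty
  by_cases hall : A ∩ gridBoundary (m + 1) (n + 1) = gridBoundary (m + 1) (n + 1)
  · exact .inr (.inl hall)
  · exact .inr (.inr ⟨hall, (SimpleGraph.connected_iff _).mpr
      ⟨preconnected_induce_inter_gridBoundary hA hAc, hnonempty.to_subtype⟩⟩)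
end
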